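/- arXiv:2601.03208 — 9 statements merged into one kernel-verified Lean document; each statement's English description precedes it below -/
import Mathlib

section
/- Let I be a monomial ideal of R = K[x_1,…,x_n] of height at least 2. Then I is unmixed if and only if sgn(I) is unmixed. -/
open MvPolynomial

/-- The monomial ideal of `R = K[x_1,…,x_n]` generated by the monomials `x^{v j}`,
`j = 1, …, q`, with exponent vectors `v j ∈ ℕ^n`. -/
noncomputable def monIdeal (K : Type) [Field K] {n q : ℕ} (v : Fin q → Fin n →₀ ℕ) :
    Ideal (MvPolynomial (Fin n) K) :=
  Ideal.span (Set.range fun j => monomial (v j) (1 : K))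

/-- The exponent vectors `v j` are pairwise non-comparable in the componentwise order,
i.e. the corresponding monomials form an anti-chain under divisibility.  Equivalently,
`{x^{v j}}` is the (unique) minimal monomial generating set `G(I)` of the monomial ideal
`I` it generates. -/
def AntichainFam {n q : ℕ} (v : Fin q → Fin n →₀ ℕ) : Prop :=
  ∀ j k : Fin q, v j ≤ v k → j = k

/-- The signature of the family `v` of exponent vectors (the columns of the incidence
matrix `A`): for each row `i`, the `(i,j)` entry of the signature matrix is the position
of `A i j = v j i` in the ascending list of the distinct entries of the `i`-th row of `A`,
i.e. the number of distinct values in row `i` that are strictly smaller than `v j i`.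
The columns of the resulting matrix are the exponent vectors of the generators of the
signature ideal `sgn(I) = monIdeal K (sgnExp v)`. -/
noncomputable def sgnExp {n q : ℕ} (v : Fin q → Fin n →₀ ℕ) : Fin q → Fin n →₀ ℕ :=
  fun j => Finsupp.equivFunOnFinite.symm fun i =>
    ((Finset.univ.image fun k : Fin q => v k i).filter fun m => m < v j i).card

/-- The height (codimension) of an ideal: the infimum of the heights of the prime ideals
containing it, where the height of a prime is the supremum of the lengths of chains of
primes descending from it. -/
noncomputable def heightOf {R : Type*} [CommRing R] (I : Ideal R) : ℕ∞ :=
  ⨅ p ∈ { p : PrimeSpectrum R | I ≤ p.asIdeal }, Order.height p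

/-!
An associated prime `p` of a monomial ideal `I` is generated by the variables `X i`, `i ∈ S`, and
has the form `p = I : x^a`.  This equality says that no generator is bounded by `a` on `S`, and
that each `i ∈ S` has a generator exceeding `a` in coordinate `i` only, and there by exactly one.
Fixing such generators `v (J i)`, the vector `a` can be eliminated: what remains are strict
comparisons between entries of a common row and the positivity of some entries.  The height of `I`
depends only on the positions of the zero entries.  The signature preserves the order within each
row, and it preserves zeros because, when `ht(I) ≥ 2`, no variable divides all generators, so that
every row contains a zero.
-/

section Colon

variable {A : Type*} [CommRing A]

theorem mem_associatedPrimes_quotient_iff [IsNoetherianRing A] {I p : Ideal A} :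
    p ∈ associatedPrimes A (A ⧸ I) ↔ p.IsPrime ∧ ∃ f, p = I.colon {f} := by
  have colon_mk (f : A) :
      (⊥ : Submodule A (A ⧸ I)).colon {Ideal.Quotient.mk I f} = I.colon {f} := by
    ext g
    rw [Submodule.mem_colon_singleton, Submodule.mem_colon_singleton, Submodule.mem_bot,
      ← Ideal.Quotient.eq_zero_iff_mem, smul_eq_mul, map_mul]
    rfl
  rw [AssociatedPrimes.mem_iff, isAssociatedPrime_iff, Ideal.Quotient.mk_surjective.exists]
  simp only [colon_mk]

theorem colon_singleton_add_of_mem {I : Ideal A} (f : A) {e : A} (he : e ∈ I) :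
    I.colon {f + e} = I.colon {f} := by
  ext g
  rw [Submodule.mem_colon_singleton, Submodule.mem_colon_singleton, smul_add,
    Ideal.add_mem_iff_left _ (Submodule.smul_mem _ g he)]

theorem colon_singleton_mul_of_notMem {I : Ideal A} {f h : A} (hprime : (I.colon {f}).IsPrime)
    (hh : h ∉ I.colon {f}) : I.colon {h * f} = I.colon {f} := by
  ext g
  rw [Submodule.mem_colon_singleton, smul_eq_mul, ← mul_assoc, ← smul_eq_mul,
    ← Submodule.mem_colon_singleton, hprime.mul_mem_iff_mem_or_mem, or_iff_left hh]

end Colon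

section MonomialIdeal

variable {σ R : Type*} [CommRing R]

/-- An ideal of a polynomial ring is monomial if it contains every monomial occurring in one of
its elements.  This avoids the choice of a generating family. -/
def IsMonomialIdeal (I : Ideal (MvPolynomial σ R)) : Prop :=
  ∀ f ∈ I, ∀ m ∈ f.support, monomial m (1 : R) ∈ I

theorem monomial_mem_of_monomial_one_mem {I : Ideal (MvPolynomial σ R)} {m : σ →₀ ℕ}
    (hm : monomial m (1 : R) ∈ I) (c : R) : monomial m c ∈ I := by
  simpa only [C_mul_monomial, mul_one] using I.mul_mem_left (C c) hm

theorem mem_of_forall_monomial_mem {I : Ideal (MvPolynomial σ R)} {f : MvPolynomial σ R}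
    (h : ∀ m ∈ f.support, monomial m (1 : R) ∈ I) : f ∈ I := by
  rw [f.as_sum]
  exact I.sum_mem fun m hm => monomial_mem_of_monomial_one_mem (h m hm) _

theorem IsMonomialIdeal.mem_iff {I : Ideal (MvPolynomial σ R)} (hI : IsMonomialIdeal I)
    {f : MvPolynomial σ R} : f ∈ I ↔ ∀ m ∈ f.support, monomial m (1 : R) ∈ I :=
  ⟨hI f, mem_of_forall_monomial_mem⟩

theorem IsMonomialIdeal.mul_monomial_mem_iff {I : Ideal (MvPolynomial σ R)}
    (hI : IsMonomialIdeal I) {f : MvPolynomial σ R} {a : σ →₀ ℕ} :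
    f * monomial a 1 ∈ I ↔ ∀ m ∈ f.support, monomial (m + a) (1 : R) ∈ I := by
  refine ⟨fun h m hm => hI _ h _ ?_, fun h => ?_⟩
  · rwa [mem_support_iff, coeff_mul_monomial, mul_one, ← mem_support_iff]
  · rw [f.as_sum, Finset.sum_mul]
    refine I.sum_mem fun m hm => ?_
    rw [monomial_mul]
    exact monomial_mem_of_monomial_one_mem (h m hm) _

theorem monomial_mem_iff_exists_X_mem {p : Ideal (MvPolynomial σ R)} (hp : p.IsPrime)
    {m : σ →₀ ℕ} : monomial m (1 : R) ∈ p ↔ ∃ i, X i ∈ p ∧ m i ≠ 0 := by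
  rw [monomial_eq, C_1, one_mul, Finsupp.prod, hp.prod_mem_iff]
  constructor
  · rintro ⟨i, hi, h⟩
    exact ⟨i, hp.mem_of_pow_mem _ h, Finsupp.mem_support_iff.1 hi⟩
  · rintro ⟨i, hXi, hmi⟩
    exact ⟨i, Finsupp.mem_support_iff.2 hmi, p.pow_mem_of_mem hXi _ (Nat.pos_of_ne_zero hmi)⟩

theorem nonempty_monomialOrder.{u} (σ : Type u) : Nonempty (MonomialOrder.{u, u} σ) := by
  obtain ⟨_, _⟩ := exists_wellFoundedGT σ
  exact ⟨MonomialOrder.lex⟩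

theorem isMonomialIdeal_of_forall_monomial_degree_mem (o : MonomialOrder σ)
    {I : Ideal (MvPolynomial σ R)} (h : ∀ f ∈ I, f ≠ 0 → monomial (o.degree f) (1 : R) ∈ I) :
    IsMonomialIdeal I := by
  classical
  intro f hf m hm
  -- The terms of `f` outside `I` add up to an element of `I` without a leading exponent.
  let outside := {k ∈ f.support | monomial k (1 : R) ∉ I}
  let r := ∑ k ∈ outside, monomial k (f.coeff k)
  have coeff_r (k : σ →₀ ℕ) : r.coeff k = if k ∈ outside then f.coeff k else 0 := by
    simp only [r, coeff_sum, coeff_monomial, Finset.sum_ite_eq']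
  have hr : r ∈ I := by
    have hsplit := Finset.sum_filter_add_sum_filter_not f.support
      (fun k => monomial k (1 : R) ∈ I) (fun k => monomial k (f.coeff k))
    rw [← f.as_sum] at hsplit
    refine (I.add_mem_iff_right (I.sum_mem fun k hk => ?_)).1 (hsplit ▸ hf)
    exact monomial_mem_of_monomial_one_mem (Finset.mem_filter.1 hk).2 _
  have hr0 : r = 0 := by
    by_contra hr0
    have hdeg := o.coeff_degree_ne_zero_iff.2 hr0
    rw [coeff_r] at hdeg
    exact (Finset.mem_filter.1 (ite_ne_right_iff.1 hdeg).1).2 (h r hr hr0)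
  by_contra hmI
  have hcoeff := coeff_r m
  rw [hr0, coeff_zero, if_pos (Finset.mem_filter.2 ⟨hm, hmI⟩)] at hcoeff
  exact mem_support_iff.1 hm hcoeff.symm

open scoped Pointwise in
theorem card_support_monomial_mul_le (m : σ →₀ ℕ) (c : R) (f : MvPolynomial σ R) :
    (monomial m c * f).support.card ≤ f.support.card := by
  classical
  calc (monomial m c * f).support.card
      ≤ ((monomial m c).support + f.support).card := Finset.card_le_card (support_mul _ _)
    _ ≤ (monomial m c).support.card * f.support.card := Finset.card_add_le
    _ ≤ 1 * f.support.card := Nat.mul_le_mul_right _ (Finset.card_le_card support_monomial_subset)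
    _ = f.support.card := one_mul _

theorem card_support_sub_monomial_coeff_lt {f : MvPolynomial σ R} {a : σ →₀ ℕ}
    (ha : a ∈ f.support) : (f - monomial a (f.coeff a)).support.card < f.support.card := by
  classical
  refine Finset.card_lt_card ((Finset.ssubset_iff_of_subset fun m hm => ?_).2 ⟨a, ha, ?_⟩)
  · by_cases hma : a = m
    · exact hma ▸ ha
    · simpa only [mem_support_iff, coeff_sub, coeff_monomial, if_neg hma, sub_zero] using hm
  · simp only [mem_support_iff, coeff_sub, coeff_monomial, if_pos, sub_self, ne_eq,
      not_true_eq_false, not_false_eq_true]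

/-- Take `f` with as few terms as possible: if `x^m ∉ p` and `x^(m + a) ∈ I`, then multiplying `f`
by `x^m` and dropping the term at `m + a` would give a shorter witness. -/
theorem exists_colon_eq_and_forall_monomial_mem {I p : Ideal (MvPolynomial σ R)} (hp : p.IsPrime)
    (h : ∃ f, p = I.colon {f}) :
    ∃ f, p = I.colon {f} ∧
      ∀ a ∈ f.support, ∀ m, monomial (m + a) (1 : R) ∈ I → monomial m (1 : R) ∈ p := by
  obtain ⟨f, hf, hmin⟩ :=
    exists_minimalFor_of_wellFoundedLT (fun f => p = I.colon {f}) (fun f => f.support.card) h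
  refine ⟨f, hf, fun a ha m hma => ?_⟩
  by_contra hmp
  let g := f - monomial a (f.coeff a)
  have hterm : monomial m (1 : R) * monomial a (f.coeff a) ∈ I := by
    rw [monomial_mul]
    exact monomial_mem_of_monomial_one_mem hma _
  have hg : p = I.colon {monomial m 1 * g} := by
    rw [← colon_singleton_add_of_mem _ hterm, ← mul_add, sub_add_cancel,
      colon_singleton_mul_of_notMem (hf ▸ hp) (hf ▸ hmp), hf]
  have hlt : (monomial m 1 * g).support.card < f.support.card :=
    (card_support_monomial_mul_le m 1 g).trans_lt (card_support_sub_monomial_coeff_lt ha)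
  exact hlt.not_ge (hmin hg hlt.le)

theorem IsMonomialIdeal.of_prime_eq_colon [NoZeroDivisors R] {I p : Ideal (MvPolynomial σ R)}
    (hI : IsMonomialIdeal I) (hp : p.IsPrime) (h : ∃ f, p = I.colon {f}) :
    IsMonomialIdeal p ∧ ∃ a, ∀ m, monomial m (1 : R) ∈ p ↔ monomial (m + a) (1 : R) ∈ I := by
  obtain ⟨f, hf, hmem⟩ := exists_colon_eq_and_forall_monomial_mem hp h
  have mul_mem (g : MvPolynomial σ R) (hg : g ∈ p) : g * f ∈ I := by
    rwa [hf, Submodule.mem_colon_singleton] at hg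
  have hf0 : f ≠ 0 := by
    rintro rfl
    exact hp.ne_top (hf.trans Submodule.colon_singleton_zero)
  constructor
  · obtain ⟨o⟩ := nonempty_monomialOrder σ
    refine isMonomialIdeal_of_forall_monomial_degree_mem o fun g hg hg0 =>
      hmem _ (o.degree_mem_support hf0) _ (hI _ (mul_mem g hg) _ ?_)
    rw [← o.degree_mul hg0 hf0]
    exact o.degree_mem_support (mul_ne_zero hg0 hf0)
  · obtain ⟨a, ha⟩ := support_nonempty.2 hf0
    refine ⟨a, fun m => ⟨fun hm => hI _ (mul_mem _ hm) _ ?_, hmem a ha m⟩⟩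
    rwa [mem_support_iff, coeff_monomial_mul, one_mul, ← mem_support_iff]

/-- The ideal of `R[σ]` generated by the monomials with exponent vectors `v j`, for an arbitrary
family `v`. -/
noncomputable def spanMonomial {ι : Type*} (R : Type*) [CommRing R] (v : ι → σ →₀ ℕ) :
    Ideal (MvPolynomial σ R) :=
  Ideal.span (Set.range fun j => monomial (v j) (1 : R))

variable {ι : Type*} (v : ι → σ →₀ ℕ)

theorem mem_spanMonomial {f : MvPolynomial σ R} :
    f ∈ spanMonomial R v ↔ ∀ m ∈ f.support, ∃ j, v j ≤ m := by
  have h := mem_ideal_span_monomial_image (x := f) (s := Set.range v)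
  simp only [← Set.range_comp, Set.exists_range_iff] at h
  exact h

theorem monomial_mem_spanMonomial [Nontrivial R] {m : σ →₀ ℕ} :
    monomial m (1 : R) ∈ spanMonomial R v ↔ ∃ j, v j ≤ m := by
  classical
  rw [mem_spanMonomial, support_monomial, if_neg one_ne_zero]
  simp only [Finset.mem_singleton, forall_eq]

theorem isMonomialIdeal_spanMonomial : IsMonomialIdeal (spanMonomial R v) := by
  intro f hf m hm
  refine (mem_spanMonomial v).2 fun k hk => ?_
  rw [Finset.mem_singleton.1 (support_monomial_subset hk)]
  exact (mem_spanMonomial v).1 hf m hm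

theorem spanMonomial_le_iff {p : Ideal (MvPolynomial σ R)} (hp : p.IsPrime) :
    spanMonomial R v ≤ p ↔ ∀ j, ∃ i, X i ∈ p ∧ v j i ≠ 0 := by
  rw [spanMonomial, Ideal.span_le, Set.range_subset_iff]
  exact forall_congr' fun j => monomial_mem_iff_exists_X_mem hp

end MonomialIdeal

section CornerFamily

variable {σ ι : Type*}

/-- The combinatorial certificate for the prime generated by the variables in `S` to be associated
to the ideal generated by the monomials with exponents `v j`: the generator `J i` is the one
exceeding, in coordinate `i` only, the exponent `a` with `I : x^a` equal to that prime. -/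
structure IsCornerFamily (v : ι → σ →₀ ℕ) {S : Set σ} (J : S → ι) : Prop where
  ne_zero : ∀ i, v (J i) i ≠ 0
  lt_of_ne : ∀ i k, i ≠ k → v (J i) k < v (J k) k
  exists_le : ∀ j, ∃ i : S, v (J i) i ≤ v j i

theorem IsCornerFamily.le {v : ι → σ →₀ ℕ} {S : Set σ} {J : S → ι} (hJ : IsCornerFamily v J)
    (i k : S) : v (J i) k ≤ v (J k) k := by
  obtain rfl | hik := eq_or_ne i k
  · exact le_rfl
  · exact (hJ.lt_of_ne i k hik).le

theorem exists_mem_lt_of_colon {v : ι → σ →₀ ℕ} {S : Set σ} {a : σ →₀ ℕ}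
    (ha : ∀ m : σ →₀ ℕ, (∃ i ∈ S, m i ≠ 0) ↔ ∃ j, v j ≤ m + a) (j : ι) :
    ∃ i ∈ S, a i < v j i := by
  classical
  by_contra! hle
  obtain ⟨i, hi, hmi⟩ := (ha ((v j).filter (· ∉ S))).2 ⟨j, fun k => by
    by_cases hk : k ∈ S
    · exact (hle k hk).trans (Nat.le_add_left _ _)
    · rw [Finsupp.add_apply, Finsupp.filter_apply_pos (· ∉ S) _ hk]
      exact Nat.le_add_right _ _⟩
  exact hmi (Finsupp.filter_apply_neg (· ∉ S) _ (not_not.2 hi))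

theorem exists_isCornerFamily_of_colon {v : ι → σ →₀ ℕ} {S : Set σ} {a : σ →₀ ℕ}
    (ha : ∀ m : σ →₀ ℕ, (∃ i ∈ S, m i ≠ 0) ↔ ∃ j, v j ≤ m + a) :
    ∃ J : S → ι, IsCornerFamily v J := by
  classical
  have exists_le_single_add (i : S) : ∃ j, v j ≤ Finsupp.single i.1 1 + a :=
    (ha _).1 ⟨i, i.2, by rw [Finsupp.single_eq_same]; exact one_ne_zero⟩
  choose J hJ using exists_le_single_add
  have le_of_ne (i : S) {k : σ} (hk : k ≠ i) : v (J i) k ≤ a k := by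
    simpa only [Finsupp.add_apply, Finsupp.single_eq_of_ne hk, zero_add] using hJ i k
  have eq_add_one (i : S) : v (J i) i = a i + 1 := by
    obtain ⟨k, -, hk⟩ := exists_mem_lt_of_colon ha (J i)
    have hki : k = i := by_contra fun hki => (le_of_ne i hki).not_gt hk
    refine le_antisymm ?_ (hki ▸ hk)
    simpa only [Finsupp.add_apply, Finsupp.single_eq_same, add_comm] using hJ i i
  refine ⟨J, fun i => ?_, fun i k hik => ?_, fun j => ?_⟩
  · rw [eq_add_one]
    exact Nat.succ_ne_zero _
  · rw [eq_add_one k]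
    exact Nat.lt_succ_of_le (le_of_ne i (Subtype.coe_ne_coe.2 hik.symm))
  · obtain ⟨i, hi, hlt⟩ := exists_mem_lt_of_colon ha j
    exact ⟨⟨i, hi⟩, (eq_add_one ⟨i, hi⟩).trans_le hlt⟩

theorem IsCornerFamily.exists_colon [Finite σ] {v : ι → σ →₀ ℕ} {S : Set σ} {J : S → ι}
    (hJ : IsCornerFamily v J) :
    ∃ a : σ →₀ ℕ, ∀ m : σ →₀ ℕ, (∃ i ∈ S, m i ≠ 0) ↔ ∃ j, v j ≤ m + a := by
  classical
  have := Fintype.ofFinite S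
  -- `x^a` is the least common multiple of the `x^(v (J i))`, divided by the variables in `S`.
  let a : σ →₀ ℕ := Finsupp.equivFunOnFinite.symm fun k =>
    (Finset.univ.sup fun i => v (J i) k) - S.indicator 1 k
  have le_sup (i : S) (k : σ) : v (J i) k ≤ Finset.univ.sup fun i => v (J i) k :=
    Finset.le_sup (f := fun i => v (J i) k) (Finset.mem_univ i)
  have a_mem (k : S) : a k + 1 = v (J k) k := by
    have hsup : (Finset.univ.sup fun i => v (J i) k) = v (J k) k :=
      le_antisymm (Finset.sup_le fun i _ => hJ.le i k) (le_sup k k)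
    simp only [a, Finsupp.equivFunOnFinite_symm_apply_apply, hsup,
      Set.indicator_of_mem k.2, Pi.one_apply]
    exact Nat.sub_add_cancel (Nat.one_le_iff_ne_zero.2 (hJ.ne_zero k))
  have a_notMem {k : σ} (hk : k ∉ S) : a k = Finset.univ.sup fun i => v (J i) k := by
    simp only [a, Finsupp.equivFunOnFinite_symm_apply_apply, Set.indicator_of_notMem hk,
      Nat.sub_zero]
  refine ⟨a, fun m => ⟨?_, ?_⟩⟩
  · rintro ⟨i, hi, hmi⟩
    refine ⟨J ⟨i, hi⟩, fun k => ?_⟩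
    rw [Finsupp.add_apply]
    by_cases hk : k ∈ S
    · have hak := a_mem ⟨k, hk⟩
      obtain rfl | hki := eq_or_ne k i
      · lia
      · have hlt := hJ.lt_of_ne ⟨i, hi⟩ ⟨k, hk⟩ (Subtype.coe_ne_coe.1 hki.symm)
        lia
    · rw [a_notMem hk]
      exact (le_sup ⟨i, hi⟩ k).trans (Nat.le_add_left _ _)
  · rintro ⟨j, hj⟩
    obtain ⟨i, hi⟩ := hJ.exists_le j
    have hji := hj i
    rw [Finsupp.add_apply] at hji
    have hai := a_mem i
    exact ⟨i, i.2, by lia⟩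

end CornerFamily

section AssociatedPrimes

variable {σ ι R : Type*} [CommRing R] [IsNoetherianRing R] [IsDomain R] [Finite σ]

theorem mem_associatedPrimes_spanMonomial_iff {v : ι → σ →₀ ℕ} {p : Ideal (MvPolynomial σ R)} :
    p ∈ associatedPrimes (MvPolynomial σ R) (MvPolynomial σ R ⧸ spanMonomial R v) ↔
      p.IsPrime ∧ IsMonomialIdeal p ∧ ∃ J : {i | X i ∈ p} → ι, IsCornerFamily v J := by
  have hI := isMonomialIdeal_spanMonomial (R := R) v
  rw [mem_associatedPrimes_quotient_iff]
  refine and_congr_right fun hp => ⟨fun h => ?_, fun ⟨hpm, J, hJ⟩ => ?_⟩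
  · obtain ⟨hpm, a, ha⟩ := hI.of_prime_eq_colon hp h
    refine ⟨hpm, exists_isCornerFamily_of_colon (a := a) fun m => ?_⟩
    exact (monomial_mem_iff_exists_X_mem hp).symm.trans
      ((ha m).trans (monomial_mem_spanMonomial v))
  · obtain ⟨a, ha⟩ := hJ.exists_colon
    refine ⟨monomial a 1, Ideal.ext fun g => ?_⟩
    rw [hpm.mem_iff, Submodule.mem_colon_singleton, smul_eq_mul, hI.mul_monomial_mem_iff]
    refine forall₂_congr fun m _ => ?_
    rw [monomial_mem_iff_exists_X_mem hp, monomial_mem_spanMonomial]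
    exact ha m

theorem exists_eq_zero_of_two_le_heightOf {v : ι → σ →₀ ℕ}
    (h : 2 ≤ heightOf (spanMonomial R v)) (i : σ) : ∃ j, v j i = 0 := by
  by_contra! hne
  have hX : Prime (X i : MvPolynomial σ R) := X_prime
  have hprime : (Ideal.span {(X i : MvPolynomial σ R)}).IsPrime :=
    (Ideal.span_singleton_prime hX.ne_zero).2 hX
  have hle : spanMonomial R v ≤ Ideal.span {X i} :=
    (spanMonomial_le_iff v hprime).2 fun j => ⟨i, Ideal.mem_span_singleton_self _, hne j⟩
  have height_le_one : heightOf (spanMonomial R v) ≤ 1 :=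
    calc heightOf (spanMonomial R v)
        ≤ Order.height (⟨_, hprime⟩ : PrimeSpectrum (MvPolynomial σ R)) :=
          iInf₂_le (⟨_, hprime⟩ : PrimeSpectrum _) hle
      _ = (Ideal.span {(X i : MvPolynomial σ R)}).height :=
        (PrimeSpectrum.height_eq_orderHeight _).symm
      _ ≤ 1 := Ideal.height_span_singleton_le_one hX.not_isUnit
  exact absurd (h.trans height_le_one) (by decide)

end AssociatedPrimes

section Signature

variable {σ ι : Type*}

/-- Two families of exponent vectors, read as matrices with rows indexed by the variables, are row
equivalent if their entries are ordered in the same way within each row and vanish at the same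
positions. -/
structure IsRowEquiv (v w : ι → σ →₀ ℕ) : Prop where
  lt_iff_lt : ∀ i j k, v j i < v k i ↔ w j i < w k i
  eq_zero_iff : ∀ i j, v j i = 0 ↔ w j i = 0

theorem IsRowEquiv.symm {v w : ι → σ →₀ ℕ} (h : IsRowEquiv v w) : IsRowEquiv w v where
  lt_iff_lt i j k := (h.lt_iff_lt i j k).symm
  eq_zero_iff i j := (h.eq_zero_iff i j).symm

theorem IsCornerFamily.of_isRowEquiv {v w : ι → σ →₀ ℕ} {S : Set σ} {J : S → ι}
    (hJ : IsCornerFamily v J) (h : IsRowEquiv v w) : IsCornerFamily w J where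
  ne_zero i := (h.eq_zero_iff _ _).not.1 (hJ.ne_zero i)
  lt_of_ne i k hik := (h.lt_iff_lt _ _ _).1 (hJ.lt_of_ne i k hik)
  exists_le j := (hJ.exists_le j).imp fun _ hle => not_lt.1 ((h.lt_iff_lt _ _ _).not.1 hle.not_gt)

theorem IsRowEquiv.isCornerFamily_iff {v w : ι → σ →₀ ℕ} (h : IsRowEquiv v w) {S : Set σ}
    {J : S → ι} : IsCornerFamily v J ↔ IsCornerFamily w J :=
  ⟨fun hJ => hJ.of_isRowEquiv h, fun hJ => hJ.of_isRowEquiv h.symm⟩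

open Classical in
/-- The signature of an arbitrary family of exponent vectors: each entry is replaced by the number
of distinct smaller values in its row. -/
noncomputable def signature [Finite σ] (v : ι → σ →₀ ℕ) : ι → σ →₀ ℕ :=
  fun j => Finsupp.equivFunOnFinite.symm fun i => Nat.count (fun m => ∃ k, v k i = m) (v j i)

theorem signature_lt_signature_iff [Finite σ] {v : ι → σ →₀ ℕ} {i : σ} {j k : ι} :
    signature v j i < signature v k i ↔ v j i < v k i := by
  classical
  exact ⟨Nat.lt_of_count_lt_count, fun h => Nat.count_strict_mono ⟨j, rfl⟩ h⟩

theorem signature_eq_zero [Finite σ] {v : ι → σ →₀ ℕ} {i : σ} {j : ι} (h : v j i = 0) :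
    signature v j i = 0 := by
  simp only [signature, Finsupp.equivFunOnFinite_symm_apply_apply, h, Nat.count_zero]

theorem isRowEquiv_signature [Finite σ] {v : ι → σ →₀ ℕ} (h : ∀ i, ∃ j, v j i = 0) :
    IsRowEquiv v (signature v) where
  lt_iff_lt _ _ _ := signature_lt_signature_iff.symm
  eq_zero_iff i j := by
    obtain ⟨l, hl⟩ := h i
    have hpos := signature_lt_signature_iff (v := v) (i := i) (j := l) (k := j)
    rw [hl, signature_eq_zero hl] at hpos
    lia

theorem sgnExp_eq_signature {n q : ℕ} (v : Fin q → Fin n →₀ ℕ) : sgnExp v = signature v := by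
  ext j i
  simp only [sgnExp, signature, Finsupp.equivFunOnFinite_symm_apply_apply,
    Nat.count_eq_card_filter_range]
  congr 1
  ext m
  simp only [Finset.mem_filter, Finset.mem_image, Finset.mem_univ, true_and, Finset.mem_range,
    and_comm]

end Signature

section Unmixed

/-- An ideal is unmixed if all its associated primes have the height of the ideal. -/
def IsUnmixed {A : Type*} [CommRing A] (I : Ideal A) : Prop :=
  ∀ p ∈ associatedPrimes A (A ⧸ I), heightOf p = heightOf I

variable {σ ι R : Type*} [CommRing R]

theorem IsRowEquiv.heightOf_spanMonomial_eq {v w : ι → σ →₀ ℕ} (h : IsRowEquiv v w) :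
    heightOf (spanMonomial R v) = heightOf (spanMonomial R w) := by
  have hle (p : PrimeSpectrum (MvPolynomial σ R)) :
      spanMonomial R v ≤ p.asIdeal ↔ spanMonomial R w ≤ p.asIdeal := by
    simp only [spanMonomial_le_iff _ p.isPrime, ne_eq, h.eq_zero_iff]
  simp only [heightOf, hle]

variable [IsNoetherianRing R] [IsDomain R] [Finite σ]

theorem IsRowEquiv.associatedPrimes_spanMonomial_eq {v w : ι → σ →₀ ℕ} (h : IsRowEquiv v w) :
    associatedPrimes (MvPolynomial σ R) (MvPolynomial σ R ⧸ spanMonomial R v) =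
      associatedPrimes (MvPolynomial σ R) (MvPolynomial σ R ⧸ spanMonomial R w) := by
  ext p
  simp only [mem_associatedPrimes_spanMonomial_iff, h.isCornerFamily_iff]

theorem unmixed_iff_unmixed_sgn_general (v : ι → σ →₀ ℕ) (hht : 2 ≤ heightOf (spanMonomial R v)) :
    IsUnmixed (spanMonomial R v) ↔ IsUnmixed (spanMonomial R (signature v)) := by
  have h := isRowEquiv_signature (exists_eq_zero_of_two_le_heightOf hht)
  rw [IsUnmixed, IsUnmixed, h.associatedPrimes_spanMonomial_eq, h.heightOf_spanMonomial_eq]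

end Unmixed

/-- **Signature invariants of monomial ideals** (Theorem: unmixedness).
Let `I` be a monomial ideal of `R = K[x_1,…,x_n]` of height at least `2`, with minimal
monomial generating set `G(I) = {x^{v_1},…,x^{v_q}}`.  Then `I` is unmixed (all its
associated primes have height `ht(I)`) if and only if `sgn(I)` is unmixed. -/
theorem unmixed_iff_unmixed_sgn (K : Type) [Field K] (n q : ℕ)
    (v : Fin q → Fin n →₀ ℕ) (hv : AntichainFam v)
    (I : Ideal (MvPolynomial (Fin n) K)) (hI : I = monIdeal K v)
    (hht : (2 : ℕ∞) ≤ heightOf I) :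
    (∀ p ∈ associatedPrimes (MvPolynomial (Fin n) K) (MvPolynomial (Fin n) K ⧸ I),
        heightOf p = heightOf I) ↔
      (∀ p ∈ associatedPrimes (MvPolynomial (Fin n) K)
          (MvPolynomial (Fin n) K ⧸ monIdeal K (sgnExp v)),
        heightOf p = heightOf (monIdeal K (sgnExp v))) := by
  subst hI
  exact sgnExp_eq_signature v ▸ unmixed_iff_unmixed_sgn_general v hht
end

section
/- If I is a monomial ideal of R = K[x_1,…,x_n] that is not a principal ideal, then the signature ideal sgn(I) has height at least 2. -/
/-!
Every row of the signature matrix contains a zero, attained where the row of the incidence matrix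
is minimal, so no variable divides all the generators of `sgn(I)`. A prime `p` containing `sgn(I)`
contains a variable `x_a` dividing the first generator, and also a variable `x_b` dividing a
generator free of `x_a`; hence `0 ⊂ (x_a) ⊂ p` is a chain of primes.
-/

open MvPolynomial

theorem two_le_height_of_prime_mem_of_not_dvd {R : Type*} [CommRing R] [IsDomain R]
    {p : PrimeSpectrum R} {x y : R} (hx : Prime x) (hxp : x ∈ p.asIdeal) (hyp : y ∈ p.asIdeal)
    (hxy : ¬ x ∣ y) : 2 ≤ Order.height p := by
  let P : PrimeSpectrum R := ⟨Ideal.span {x}, Ideal.isPrime_span_singleton_of_prime hx⟩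
  have bot_lt_P : ⊥ < P := by
    rw [← PrimeSpectrum.asIdeal_lt_asIdeal, PrimeSpectrum.asIdeal_bot, bot_lt_iff_ne_bot]
    exact mt Ideal.span_singleton_eq_bot.mp hx.ne_zero
  have P_lt_p : P < p := by
    rw [← PrimeSpectrum.asIdeal_lt_asIdeal]
    refine SetLike.lt_iff_le_and_exists.mpr
      ⟨(Ideal.span_singleton_le_iff_mem _).mpr hxp, y, hyp, ?_⟩
    exact mt Ideal.mem_span_singleton.mp hxy
  rw [← one_add_one_eq_two]
  exact Order.add_one_le_of_lt (Order.one_lt_height_iff.mpr ⟨P, ⊥, bot_lt_P, P_lt_p⟩)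

theorem exists_mem_support_X_mem_of_monomial_mem {R σ : Type*} [CommSemiring R]
    {p : Ideal (MvPolynomial σ R)} [hp : p.IsPrime] {s : σ →₀ ℕ} (hs : monomial s 1 ∈ p) :
    ∃ i ∈ s.support, X i ∈ p := by
  rw [monomial_eq, C_1, one_mul, Finsupp.prod, Ideal.IsPrime.prod_mem_iff] at hs
  obtain ⟨i, hi, hXi⟩ := hs
  exact ⟨i, hi, hp.mem_of_pow_mem _ hXi⟩

theorem two_le_heightOf_span_monomial {R σ ι : Type*} [CommRing R] [IsDomain R] [Nonempty ι]
    (w : ι → σ →₀ ℕ) (hw : ∀ i, ∃ j, w j i = 0) :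
    2 ≤ heightOf (Ideal.span (Set.range fun j => monomial (w j) (1 : R))) := by
  refine le_iInf₂ fun p hp => ?_
  have exists_X_mem (j : ι) : ∃ i ∈ (w j).support, X i ∈ p.asIdeal :=
    exists_mem_support_X_mem_of_monomial_mem (hp (Ideal.subset_span ⟨j, rfl⟩))
  obtain ⟨a, -, hap⟩ := exists_X_mem (Classical.arbitrary ι)
  obtain ⟨j, hja⟩ := hw a
  obtain ⟨b, hb, hbp⟩ := exists_X_mem j
  have a_ne_b : a ≠ b := by
    rintro rfl
    exact Finsupp.mem_support_iff.mp hb hja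
  exact two_le_height_of_prime_mem_of_not_dvd X_prime hap hbp (mt X_dvd_X.mp a_ne_b)

section Signature

variable {n q : ℕ} (v : Fin q → Fin n →₀ ℕ)

theorem sgnExp_apply_eq_zero_iff (j : Fin q) (i : Fin n) :
    sgnExp v j i = 0 ↔ ∀ k, v j i ≤ v k i := by
  simp [sgnExp, Finset.filter_eq_empty_iff]

theorem exists_sgnExp_apply_eq_zero [Nonempty (Fin q)] (i : Fin n) : ∃ j, sgnExp v j i = 0 := by
  simpa only [sgnExp_apply_eq_zero_iff] using Finite.exists_min fun k => v k i

theorem isPrincipal_monIdeal_of_isEmpty (K : Type) [Field K] [IsEmpty (Fin q)] :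
    (monIdeal K v).IsPrincipal := by
  rw [monIdeal, Set.range_eq_empty, Ideal.span_empty]
  exact bot_isPrincipal

theorem two_le_height_sgn_general (K : Type) [Field K] [Nonempty (Fin q)] :
    2 ≤ heightOf (monIdeal K (sgnExp v)) :=
  two_le_heightOf_span_monomial (sgnExp v) (exists_sgnExp_apply_eq_zero v)

end Signature

/-- **Signature invariants of monomial ideals** (Proposition: height of the signature).
If `I` is a monomial ideal of `R = K[x_1,…,x_n]` that is not a principal ideal, with
minimal monomial generating set `G(I) = {x^{v_1},…,x^{v_q}}`, then `ht(sgn(I)) ≥ 2`. -/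
theorem two_le_height_sgn (K : Type) [Field K] (n q : ℕ)
    (v : Fin q → Fin n →₀ ℕ) (hv : AntichainFam v)
    (I : Ideal (MvPolynomial (Fin n) K)) (hI : I = monIdeal K v)
    (hnp : ¬ Submodule.IsPrincipal I) :
    (2 : ℕ∞) ≤ heightOf (monIdeal K (sgnExp v)) := by
  have : Nonempty (Fin q) :=
    not_isEmpty_iff.mp fun _ => hnp (hI ▸ isPrincipal_monIdeal_of_isEmpty v K)
  exact two_le_height_sgn_general v K
end

section
/- For every monomial ideal I of R = K[x_1,…,x_n], the signature operation is idempotent: sgn(sgn(I)) = sgn(I). -/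
open MvPolynomial

/-! The signature replaces every entry of a row by its rank among the entries of that row, a
strictly increasing operation. It therefore preserves and reflects the order between exponent
vectors, so that the columns of `sgn(A)` again form an antichain and are exactly `G(sgn(I))`.
Ranks are unchanged by strictly increasing maps, so ranking the entries a second time changes
nothing. -/

/-- The position, counted from `0`, of `a` in the ascending list of the elements of `s`. It is
encoded as a number of smaller elements, so that it is defined for `a ∉ s` as well. -/
def rankIn {α : Type*} [Preorder α] [DecidableLT α] (s : Finset α) (a : α) : ℕ :=
  (s.filter fun m => m < a).card

theorem strictMonoOn_rankIn {α : Type*} [Preorder α] [DecidableLT α] (s : Finset α) :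
    StrictMonoOn (rankIn s) s := by
  intro a ha b _ hab
  have subset : s.filter (· < a) ⊆ s.filter (· < b) :=
    Finset.monotone_filter_right s fun _ _ hm => hm.trans hab
  have mem : a ∈ s.filter (· < b) := Finset.mem_filter.2 ⟨ha, hab⟩
  have notMem : a ∉ s.filter (· < a) := fun h => lt_irrefl a (Finset.mem_filter.1 h).2
  exact Finset.card_lt_card (Finset.ssubset_iff_of_subset subset |>.2 ⟨a, mem, notMem⟩)

theorem rankIn_image {α β : Type*} [LinearOrder α] [Preorder β] [DecidableLT β] [DecidableEq β]
    {f : α → β} {s : Finset α} (hf : StrictMonoOn f s) {a : α} (ha : a ∈ s) :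
    rankIn (s.image f) (f a) = rankIn s a := by
  have injOn : Set.InjOn f (s.filter (· < a)) :=
    hf.injOn.mono (Finset.coe_subset.2 (Finset.filter_subset _ s))
  have filter_eq : (s.image f).filter (· < f a) = (s.filter (· < a)).image f := by
    rw [Finset.filter_image, Finset.filter_congr fun m hm => hf.lt_iff_lt hm ha]
  rw [rankIn, filter_eq, Finset.card_image_of_injOn injOn, rankIn]

section Signature

variable {n q q' : ℕ}

/-- The set of distinct entries of the `i`-th row of the incidence matrix with columns `v j`. -/
def rowValues (v : Fin q → Fin n →₀ ℕ) (i : Fin n) : Finset ℕ :=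
  Finset.univ.image fun k => v k i

theorem apply_mem_rowValues (v : Fin q → Fin n →₀ ℕ) (j : Fin q) (i : Fin n) :
    v j i ∈ rowValues v i :=
  Finset.mem_image_of_mem _ (Finset.mem_univ j)

theorem coe_rowValues (v : Fin q → Fin n →₀ ℕ) (i : Fin n) :
    (rowValues v i : Set ℕ) = (fun a => a i) '' Set.range v := by
  rw [rowValues, Finset.coe_image, Finset.coe_univ, Set.image_univ, ← Set.range_comp]
  rfl

theorem rowValues_congr {v : Fin q → Fin n →₀ ℕ} {w : Fin q' → Fin n →₀ ℕ}
    (h : Set.range v = Set.range w) : rowValues v = rowValues w :=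
  funext fun i => Finset.coe_injective <| by rw [coe_rowValues, coe_rowValues, h]

theorem sgnExp_apply (v : Fin q → Fin n →₀ ℕ) (j : Fin q) (i : Fin n) :
    sgnExp v j i = rankIn (rowValues v i) (v j i) :=
  rfl

theorem rowValues_sgnExp (v : Fin q → Fin n →₀ ℕ) (i : Fin n) :
    rowValues (sgnExp v) i = (rowValues v i).image (rankIn (rowValues v i)) := by
  unfold rowValues
  rw [Finset.image_image]
  rfl

theorem sgnExp_sgnExp (v : Fin q → Fin n →₀ ℕ) : sgnExp (sgnExp v) = sgnExp v := by
  funext j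
  ext i
  calc sgnExp (sgnExp v) j i
      = rankIn ((rowValues v i).image (rankIn (rowValues v i)))
          (rankIn (rowValues v i) (v j i)) := by
        rw [sgnExp_apply, rowValues_sgnExp, sgnExp_apply]
    _ = rankIn (rowValues v i) (v j i) :=
        rankIn_image (strictMonoOn_rankIn _) (apply_mem_rowValues v j i)
    _ = sgnExp v j i := (sgnExp_apply v j i).symm

theorem sgnExp_le_sgnExp_iff (v : Fin q → Fin n →₀ ℕ) (j k : Fin q) :
    sgnExp v j ≤ sgnExp v k ↔ v j ≤ v k :=
  forall_congr' fun i => (strictMonoOn_rankIn (rowValues v i)).le_iff_le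
    (apply_mem_rowValues v j i) (apply_mem_rowValues v k i)

theorem AntichainFam.sgnExp {v : Fin q → Fin n →₀ ℕ} (hv : AntichainFam v) :
    AntichainFam (sgnExp v) :=
  fun j k h => hv j k ((sgnExp_le_sgnExp_iff v j k).1 h)

theorem range_sgnExp (v : Fin q → Fin n →₀ ℕ) :
    Set.range (sgnExp v) =
      (fun a => Finsupp.equivFunOnFinite.symm fun i => rankIn (rowValues v i) (a i)) ''
        Set.range v := by
  rw [← Set.range_comp]
  rfl

theorem range_sgnExp_congr {v : Fin q → Fin n →₀ ℕ} {w : Fin q' → Fin n →₀ ℕ}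
    (h : Set.range v = Set.range w) : Set.range (sgnExp v) = Set.range (sgnExp w) := by
  rw [range_sgnExp, range_sgnExp, rowValues_congr h, h]

end Signature

section MonomialIdeal

variable (K : Type) [Field K] {n q q' : ℕ}

theorem monIdeal_eq_span_image (v : Fin q → Fin n →₀ ℕ) :
    monIdeal K v = Ideal.span ((fun a => monomial a (1 : K)) '' Set.range v) :=
  congrArg Ideal.span (Set.range_comp (fun a => monomial a (1 : K)) v)

theorem monIdeal_congr {v : Fin q → Fin n →₀ ℕ} {w : Fin q' → Fin n →₀ ℕ}
    (h : Set.range v = Set.range w) : monIdeal K v = monIdeal K w := by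
  rw [monIdeal_eq_span_image, monIdeal_eq_span_image, h]

theorem monomial_mem_monIdeal_iff (v : Fin q → Fin n →₀ ℕ) (a : Fin n →₀ ℕ) :
    monomial a (1 : K) ∈ monIdeal K v ↔ a ∈ upperClosure (Set.range v) := by
  classical
  rw [monIdeal_eq_span_image, mem_ideal_span_monomial_image, support_monomial,
    if_neg one_ne_zero]
  simp only [Finset.mem_singleton, forall_eq, mem_upperClosure]

variable {K}

theorem upperClosure_range_eq_of_monIdeal_eq {v : Fin q → Fin n →₀ ℕ}
    {w : Fin q' → Fin n →₀ ℕ} (h : monIdeal K v = monIdeal K w) :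
    upperClosure (Set.range v) = upperClosure (Set.range w) := by
  ext a
  rw [SetLike.mem_coe, SetLike.mem_coe, ← monomial_mem_monIdeal_iff K, h,
    monomial_mem_monIdeal_iff]

theorem AntichainFam.isAntichain_range {v : Fin q → Fin n →₀ ℕ} (hv : AntichainFam v) :
    IsAntichain (· ≤ ·) (Set.range v) := by
  rintro _ ⟨j, rfl⟩ _ ⟨k, rfl⟩ hne hle
  exact hne (congrArg v (hv j k hle))

theorem AntichainFam.range_eq_of_monIdeal_eq {v : Fin q → Fin n →₀ ℕ}
    {w : Fin q' → Fin n →₀ ℕ} (hv : AntichainFam v) (hw : AntichainFam w)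
    (h : monIdeal K v = monIdeal K w) : Set.range v = Set.range w := by
  ext a
  rw [← hv.isAntichain_range.minimal_mem_upperClosure_iff_mem,
    upperClosure_range_eq_of_monIdeal_eq h,
    hw.isAntichain_range.minimal_mem_upperClosure_iff_mem]

end MonomialIdeal

/-- **Signature invariants of monomial ideals** (Lemma: idempotence of the signature).
For every monomial ideal `I` of `R = K[x_1,…,x_n]`, with minimal monomial generating
set `G(I) = {x^{v_1},…,x^{v_q}}`, one has `sgn(sgn(I)) = sgn(I)`: if
`G(sgn(I)) = {x^{w_1},…,x^{w_{q'}}}` is the minimal monomial generating set of the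
signature ideal `sgn(I)`, then the signature ideal of `sgn(I)` is `sgn(I)` itself. -/
theorem sgn_sgn_eq_sgn (K : Type) [Field K] (n q : ℕ)
    (v : Fin q → Fin n →₀ ℕ) (hv : AntichainFam v)
    (q' : ℕ) (w : Fin q' → Fin n →₀ ℕ) (hw : AntichainFam w)
    (hgen : monIdeal K w = monIdeal K (sgnExp v)) :
    monIdeal K (sgnExp w) = monIdeal K (sgnExp v) := by
  have range_eq : Set.range w = Set.range (sgnExp v) := hw.range_eq_of_monIdeal_eq hv.sgnExp hgen
  calc monIdeal K (sgnExp w)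
      = monIdeal K (sgnExp (sgnExp v)) := monIdeal_congr K (range_sgnExp_congr range_eq)
    _ = monIdeal K (sgnExp v) := by rw [sgnExp_sgnExp]
end

section
/- Let I ⊆ R = K[x_1,…,x_n] be a monomial ideal of height 1 that is not a principal ideal, and let f be the greatest common divisor of the monomials in G(I). Then there is a monomial ideal L of R with ht(L) ≥ 2 such that I = f·L, depth(R/I) = depth(R/L), and sgn(I) = sgn(L). -/
open MvPolynomial

/-- The graded maximal ideal `(x_1, …, x_n)` of `K[x_1,…,x_n]`. -/
noncomputable def mIdeal (K : Type) [Field K] (n : ℕ) : Ideal (MvPolynomial (Fin n) K) :=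
  Ideal.span (Set.range (X : Fin n → MvPolynomial (Fin n) K))

/-- The depth of `R/I` with respect to the maximal ideal `(x_1, …, x_n)`: the largest
length of an `R/I`-regular sequence consisting of elements of `(x_1, …, x_n)`. -/
noncomputable def depthQuot (K : Type) [Field K] (n : ℕ)
    (I : Ideal (MvPolynomial (Fin n) K)) : ℕ :=
  sSup { k : ℕ | ∃ rs : List (MvPolynomial (Fin n) K), rs.length = k ∧
    (∀ r ∈ rs, r ∈ mIdeal K n) ∧
    RingTheory.Sequence.IsRegular (MvPolynomial (Fin n) K ⧸ I) rs }

/-!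
Dividing the generators `x^{v_j}` by their greatest common divisor `f` leaves monomials `x^{u_j}`
with no common variable, generating an ideal `L` with `I = f L`. A prime containing `L` contains a
variable `x_i` dividing some `x^{u_j}`, and also a variable dividing a generator that does not
involve `x_i`; two distinct variables force height at least `2`. Subtracting a constant from a row
of the incidence matrix does not change the order of its entries, so the signature is preserved.

For the depths, multiplication by `f` is an isomorphism from `L` to `f L`. The ideal
`𝔪 = (x_1, …, x_n)` has grade `n` on `R`, so the sequences `0 → L → R → R / L → 0` and
`0 → f L → R → R / f L → 0` show that the vanishing of `Ext^i(R/𝔪, -)` for `i < k` on either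
quotient amounts to its vanishing on `L` for `i ≤ k`, as long as `k < n`. By Rees' theorem both
quotients then have the same lengths `k < n` of regular sequences in `𝔪`, and longer ones are
excluded since both quotients have dimension less than `n`.
-/

open CategoryTheory Abelian RingTheory.Sequence
open scoped nonZeroDivisors

section Grade

universe v u

variable {R : Type u} [CommRing R]

/-- `I` has grade at least `k` on `M`, expressed through the vanishing of `Ext^i(R/I, M)` for
`i < k`. By Rees' theorem this means that `I` contains an `M`-regular sequence of length `k` when
`R` is Noetherian, `M` is finitely generated and `IM ≠ M`; unlike the latter, it is well behaved
in short exact sequences. -/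
def GradeGE [Small.{v} R] (I : Ideal R) (M : Type v) [AddCommGroup M] [Module R M] (k : ℕ) :
    Prop :=
  ∀ i < k, Subsingleton (Ext (ModuleCat.of R (Shrink.{v} (R ⧸ I))) (ModuleCat.of R M) i)

lemma GradeGE.mono [Small.{v} R] {I : Ideal R} {M : Type v} [AddCommGroup M] [Module R M]
    {k l : ℕ} (h : GradeGE I M l) (hkl : k ≤ l) : GradeGE I M k :=
  fun i hi => h i (hi.trans_le hkl)

lemma exists_isRegular_iff_gradeGE [Small.{v} R] [IsNoetherianRing R] {I : Ideal R} {M : Type v}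
    [AddCommGroup M] [Module R M] [Module.Finite R M] (hIM : I • (⊤ : Submodule R M) ≠ ⊤)
    (k : ℕ) :
    (∃ rs : List R, rs.length = k ∧ (∀ r ∈ rs, r ∈ I) ∧ IsRegular M rs) ↔ GradeGE I M k :=
  (ModuleCat.exists_isRegular_tfae I k (ModuleCat.of R M) hIM.lt_top).out 3 1

lemma gradeGE_iff_gradeGE_succ_of_exact [Small.{v} R] {I : Ideal R} {M₁ M₂ M₃ : Type v}
    [AddCommGroup M₁] [Module R M₁] [AddCommGroup M₂] [Module R M₂] [AddCommGroup M₃]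
    [Module R M₃] {f : M₁ →ₗ[R] M₂} {g : M₂ →ₗ[R] M₃} (hf : Function.Injective f)
    (hfg : Function.Exact f g) (hg : Function.Surjective g) {k : ℕ}
    (h₂ : GradeGE I M₂ (k + 1)) : GradeGE I M₃ k ↔ GradeGE I M₁ (k + 1) := by
  have hS := ModuleCat.shortComplex_shortExact
    (ModuleCat.shortComplexOfCompEqZero f g hfg.linearMap_comp_eq_zero) hfg hf hg
  refine ⟨fun h₃ i hi => ?_, fun h₁ i hi => ?_⟩
  · have := h₂ i hi
    rcases i with _ | i
    · have := hS.mono_f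
      exact (Ext.postcomp_mk₀_injective_of_mono _ (ModuleCat.ofHom f)).subsingleton
    · have := h₃ i (by lia)
      refine subsingleton_of_forall_eq 0 fun x => ?_
      obtain ⟨y, rfl⟩ := Ext.covariant_sequence_exact₁ _ hS x (Subsingleton.elim _ _) rfl
      rw [Subsingleton.elim y 0, Ext.zero_comp]
  · have := h₂ i (by lia)
    have := h₁ (i + 1) (by lia)
    refine subsingleton_of_forall_eq 0 fun x => ?_
    obtain ⟨y, rfl⟩ := Ext.covariant_sequence_exact₃ _ hS x rfl (Subsingleton.elim _ _)
    rw [Subsingleton.elim y 0, Ext.zero_comp]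

lemma gradeGE_quotient_span_singleton_mul_iff {I : Ideal R} (J : Ideal R) {f : R} (hf : f ∈ R⁰)
    {k : ℕ} (hR : GradeGE I R (k + 1)) :
    GradeGE I (R ⧸ Ideal.span {f} * J) k ↔ GradeGE I J (k + 1) := by
  let mulLeft : J →ₗ[R] R := (LinearMap.mulLeft R f).comp J.subtype
  have injective_mulLeft : Function.Injective mulLeft := fun x y hxy =>
    Subtype.ext ((mul_cancel_left_mem_nonZeroDivisors hf).mp hxy)
  have exact_mulLeft_mkQ : Function.Exact mulLeft (Submodule.mkQ (Ideal.span {f} * J)) := by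
    intro y
    rw [Submodule.mkQ_apply, Submodule.Quotient.mk_eq_zero, Ideal.mem_span_singleton_mul]
    simp [mulLeft]
  exact gradeGE_iff_gradeGE_succ_of_exact injective_mulLeft exact_mulLeft_mkQ
    (Submodule.mkQ_surjective _) hR

lemma gradeGE_quotient_iff {I : Ideal R} (J : Ideal R) {k : ℕ} (hR : GradeGE I R (k + 1)) :
    GradeGE I (R ⧸ J) k ↔ GradeGE I J (k + 1) := by
  have h := gradeGE_quotient_span_singleton_mul_iff J (one_mem R⁰) hR
  rwa [Ideal.span_singleton_one, Ideal.top_mul] at h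

lemma length_le_supportDim_of_isRegular [IsNoetherianRing R] {M : Type v} [AddCommGroup M]
    [Module R M] [Module.Finite R M] {rs : List R} (h : IsRegular M rs) :
    (rs.length : WithBot ℕ∞) ≤ Module.supportDim R M := by
  induction rs generalizing M with
  | nil =>
    have := h.nontrivial
    have : Nonempty (Module.support R M) := Module.nonempty_support_of_nontrivial.to_subtype
    simpa using! Order.krullDim_nonneg (α := Module.support R M)
  | cons x rs ih =>
    rw [isRegular_cons_iff] at h
    calc ((x :: rs).length : WithBot ℕ∞) = rs.length + 1 := by simp
      _ ≤ Module.supportDim R (QuotSMulTop x M) + 1 := by gcongr; exact ih h.2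
      _ ≤ Module.supportDim R M :=
        Module.supportDim_quotSMulTop_succ_le_of_notMem_minimalPrimes
          fun _ => h.1.notMem_of_mem_minimalPrimes

lemma length_add_one_le_ringKrullDim_of_isRegular_quotient [IsNoetherianRing R] {J : Ideal R}
    {r : R} (hr : r ∈ R⁰) (hrJ : r ∈ J) {rs : List R} (h : IsRegular (R ⧸ J) rs) :
    (rs.length + 1 : WithBot ℕ∞) ≤ ringKrullDim R :=
  calc (rs.length + 1 : WithBot ℕ∞) ≤ ringKrullDim (R ⧸ J) + 1 := by
        rw [← Module.supportDim_quotient_eq_ringKrullDim]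
        gcongr
        exact length_le_supportDim_of_isRegular h
    _ ≤ ringKrullDim R := ringKrullDim_succ_le_of_surjective (Ideal.Quotient.mk J)
        Ideal.Quotient.mk_surjective hr (Ideal.Quotient.eq_zero_iff_mem.mpr hrJ)

lemma smul_top_quotient_ne_top {I J : Ideal R} (hI : I ≠ ⊤) (hJI : J ≤ I) :
    I • (⊤ : Submodule R (R ⧸ J)) ≠ ⊤ := by
  intro h
  have h' := congrArg (Submodule.comap (Submodule.mkQ J)) h
  rw [Submodule.comap_smul_top_of_surjective _ _ (Submodule.mkQ_surjective _)] at h'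
  exact hI (by simpa [hJI] using h')

lemma exists_isRegular_quotient_span_singleton_mul_iff [IsNoetherianRing R] {I J : Ideal R} {n : ℕ}
    (hR : GradeGE I R n) (hdim : ringKrullDim R ≤ n) (hI : I ≠ ⊤) (hJI : J ≤ I) {f r : R}
    (hf : f ∈ R⁰) (hr : r ∈ R⁰) (hrJ : r ∈ J) (k : ℕ) :
    (∃ rs : List R, rs.length = k ∧ (∀ r ∈ rs, r ∈ I) ∧
      IsRegular (R ⧸ Ideal.span {f} * J) rs) ↔
    ∃ rs : List R, rs.length = k ∧ (∀ r ∈ rs, r ∈ I) ∧ IsRegular (R ⧸ J) rs := by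
  have length_lt {J' : Ideal R} {r' : R} (hr' : r' ∈ R⁰) (hrJ' : r' ∈ J') {rs : List R}
      (h : IsRegular (R ⧸ J') rs) : rs.length < n := by
    have := (length_add_one_le_ringKrullDim_of_isRegular_quotient hr' hrJ' h).trans hdim
    exact_mod_cast this
  obtain hk | hk := lt_or_ge k n
  · have hR' : GradeGE I R (k + 1) := hR.mono hk
    rw [exists_isRegular_iff_gradeGE
        (smul_top_quotient_ne_top hI (Ideal.mul_le_right.trans hJI)),
      exists_isRegular_iff_gradeGE (smul_top_quotient_ne_top hI hJI),
      gradeGE_quotient_span_singleton_mul_iff J hf hR', gradeGE_quotient_iff J hR']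
  · have hfr := Ideal.mul_mem_mul (Ideal.mem_span_singleton_self f) hrJ
    constructor
    · rintro ⟨rs, rfl, -, h⟩
      exact absurd (length_lt (mul_mem hf hr) hfr h) hk.not_gt
    · rintro ⟨rs, rfl, -, h⟩
      exact absurd (length_lt hr hrJ h) hk.not_gt

end Grade

section Variables

variable {σ R : Type*}

section CommSemiring

variable [CommSemiring R]

lemma idealOfVars_ne_top [Nontrivial R] : idealOfVars σ R ≠ ⊤ := by
  rw [Ideal.ne_top_iff_one, ← C_1, ← pow_one (idealOfVars σ R), C_mem_pow_idealOfVars_iff]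
  simp

lemma span_range_monomial_le_idealOfVars {ι : Type*} {u : ι → σ →₀ ℕ} (hu : ∀ j, u j ≠ 0) :
    Ideal.span (Set.range fun j => monomial (u j) (1 : R)) ≤ idealOfVars σ R := by
  nontriviality R
  rw [Ideal.span_le]
  rintro _ ⟨j, rfl⟩
  rw [SetLike.mem_coe, ← pow_one (idealOfVars σ R),
    monomial_mem_pow_idealOfVars_iff _ _ one_ne_zero, Nat.one_le_iff_ne_zero]
  exact (Finsupp.degree_eq_zero_iff _).not.mpr (hu j)

lemma span_range_monomial_add {ι : Type*} (u : ι → σ →₀ ℕ) (g : σ →₀ ℕ) :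
    Ideal.span (Set.range fun j => monomial (g + u j) (1 : R)) =
      Ideal.span {monomial g (1 : R)} * Ideal.span (Set.range fun j => monomial (u j) 1) := by
  rw [Ideal.span_mul_span', Set.singleton_mul, ← Set.range_comp]
  simp [Function.comp_def, monomial_mul]

lemma exists_X_mem_of_monomial_mem {p : Ideal (MvPolynomial σ R)} (hp : p.IsPrime) {m : σ →₀ ℕ}
    (hm : monomial m (1 : R) ∈ p) : ∃ i, m i ≠ 0 ∧ X i ∈ p := by
  rw [monomial_eq, map_one, one_mul, Finsupp.prod] at hm
  obtain ⟨i, hi, hXi⟩ := hp.prod_mem_iff.mp hm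
  exact ⟨i, Finsupp.mem_support_iff.mp hi, hp.mem_of_pow_mem _ hXi⟩

end CommSemiring

variable [CommRing R]

lemma isSMulRegular_X_quotient_span_X_image {s : Set σ} {i : σ} (hi : i ∉ s) :
    IsSMulRegular (MvPolynomial σ R ⧸ Ideal.span (X '' s : Set (MvPolynomial σ R)))
      (X i : MvPolynomial σ R) := by
  rw [isSMulRegular_quotient_iff_mem_of_smul_mem]
  intro p hp
  rw [smul_eq_mul, mem_ideal_span_X_image] at hp
  rw [mem_ideal_span_X_image]
  intro m hm
  obtain ⟨j, hjs, hj⟩ := hp (Finsupp.single i 1 + m) (by simpa [coeff_X_mul] using hm)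
  have hij : i ≠ j := fun h => hi (h ▸ hjs)
  exact ⟨j, hjs, by simpa [hij] using hj⟩

lemma isWeaklyRegular_map_X {l : List σ} (hl : l.Nodup) :
    IsWeaklyRegular (MvPolynomial σ R) (l.map (X : σ → MvPolynomial σ R)) := by
  refine ⟨fun i hi => ?_⟩
  have hprefix : Ideal.ofList ((l.map (X : σ → MvPolynomial σ R)).take i) =
      Ideal.span (X '' {j | j ∈ l.take i}) := by
    rw [Ideal.ofList, ← List.map_take]
    congr 1
    ext
    simp only [Set.mem_ofPred_eq, List.mem_map, Set.mem_image]
  rw [smul_eq_mul, Ideal.mul_top, hprefix, List.getElem_map]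
  refine isSMulRegular_X_quotient_span_X_image fun hmem => ?_
  obtain ⟨j, hj, hji⟩ := List.mem_take_iff_getElem.mp hmem
  have := (hl.getElem_inj_iff).mp hji
  lia

lemma gradeGE_idealOfVars [Fintype σ] [IsNoetherianRing R] [Nontrivial R] :
    GradeGE (idealOfVars σ R) (MvPolynomial σ R) (Fintype.card σ) := by
  have hne : idealOfVars σ R • (⊤ : Ideal (MvPolynomial σ R)) ≠ ⊤ := by
    simpa using idealOfVars_ne_top
  have hofList : Ideal.ofList (Finset.univ.toList.map (X : σ → MvPolynomial σ R)) =
      idealOfVars σ R := by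
    rw [Ideal.ofList, idealOfVars]
    congr 1
    ext
    simp
  refine (exists_isRegular_iff_gradeGE hne _).mp
    ⟨Finset.univ.toList.map X, by simp, fun r hr => ?_,
      isWeaklyRegular_map_X (Finset.nodup_toList _), by simpa [hofList] using hne.symm⟩
  rw [← hofList]
  exact Ideal.subset_span hr

end Variables

lemma depthQuot_span_singleton_mul {K : Type} [Field K] {n : ℕ}
    {L : Ideal (MvPolynomial (Fin n) K)} (hL : L ≠ ⊥) (hLm : L ≤ mIdeal K n)
    {f : MvPolynomial (Fin n) K} (hf : f ≠ 0) :
    depthQuot K n (Ideal.span {f} * L) = depthQuot K n L := by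
  have hgrade : GradeGE (mIdeal K n) (MvPolynomial (Fin n) K) n :=
    gradeGE_idealOfVars.mono (Fintype.card_fin n).ge
  have hdim : ringKrullDim (MvPolynomial (Fin n) K) ≤ n := by simp
  obtain ⟨r, hrL, hr⟩ := Submodule.exists_mem_ne_zero_of_ne_bot hL
  exact congrArg sSup <| Set.ext <|
    exists_isRegular_quotient_span_singleton_mul_iff hgrade hdim idealOfVars_ne_top hLm
      (mem_nonZeroDivisors_of_ne_zero hf) (mem_nonZeroDivisors_of_ne_zero hr) hrL

section Height

variable {σ R : Type*} [CommRing R] [IsDomain R]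

lemma two_le_height_of_X_mem {p : PrimeSpectrum (MvPolynomial σ R)} {i k : σ} (hik : i ≠ k)
    (hi : X i ∈ p.asIdeal) (hk : X k ∈ p.asIdeal) : (2 : ℕ∞) ≤ Order.height p := by
  let zero : PrimeSpectrum (MvPolynomial σ R) := ⟨⊥, Ideal.isPrime_bot⟩
  let spanX : PrimeSpectrum (MvPolynomial σ R) :=
    ⟨Ideal.span {X i}, (Ideal.span_singleton_prime (X_ne_zero i)).mpr X_prime⟩
  have zero_lt_spanX : zero < spanX := by
    simp [← PrimeSpectrum.asIdeal_lt_asIdeal, zero, spanX, bot_lt_iff_ne_bot]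
  have spanX_lt : spanX < p := by
    rw [← PrimeSpectrum.asIdeal_lt_asIdeal]
    refine SetLike.lt_iff_le_and_exists.mpr
      ⟨(Ideal.span_singleton_le_iff_mem _).mpr hi, X k, hk, ?_⟩
    rwa [Ideal.mem_span_singleton, X_dvd_X]
  calc (2 : ℕ∞) = 0 + 1 + 1 := by norm_num
    _ ≤ Order.height zero + 1 + 1 := by gcongr; exact zero_le
    _ ≤ Order.height spanX + 1 := by gcongr; exact Order.height_add_one_le zero_lt_spanX
    _ ≤ Order.height p := Order.height_add_one_le spanX_lt

lemma two_le_heightOf_span_range_monomial {ι : Type*} [Nonempty ι] {u : ι → σ →₀ ℕ}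
    (hu : ∀ i, ∃ j, u j i = 0) :
    (2 : ℕ∞) ≤ heightOf (Ideal.span (Set.range fun j => monomial (u j) (1 : R))) := by
  refine le_iInf₂ fun p hp => ?_
  have monomial_mem (j : ι) : monomial (u j) (1 : R) ∈ p.asIdeal :=
    hp (Ideal.subset_span ⟨j, rfl⟩)
  obtain ⟨i, -, hi⟩ := exists_X_mem_of_monomial_mem p.2 (monomial_mem (Classical.arbitrary ι))
  obtain ⟨j, hji⟩ := hu i
  obtain ⟨k, hjk, hk⟩ := exists_X_mem_of_monomial_mem p.2 (monomial_mem j)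
  exact two_le_height_of_X_mem (by rintro rfl; exact hjk hji) hi hk

end Height

lemma sgnExp_add {n q : ℕ} (u : Fin q → Fin n →₀ ℕ) (g : Fin n →₀ ℕ) :
    sgnExp (fun j => g + u j) = sgnExp u := by
  funext j
  ext i
  have hshift : (Finset.univ.image fun k => g i + u k i) =
      (Finset.univ.image fun k => u k i).image (g i + ·) := by
    rw [Finset.image_image]; rfl
  simp only [sgnExp, Finsupp.equivFunOnFinite_symm_apply_apply, Finsupp.add_apply, hshift,
    Finset.filter_image, add_lt_add_iff_left]
  exact Finset.card_image_of_injective _ (add_right_injective _)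

lemma exists_eq_add_of_eq_sInf {ι σ : Type*} [Nonempty ι] {v : ι → σ →₀ ℕ} {g : σ →₀ ℕ}
    (hg : ∀ i, g i = sInf (Set.range fun j => v j i)) :
    ∃ u : ι → σ →₀ ℕ, (v = fun j => g + u j) ∧ ∀ i, ∃ j, u j i = 0 := by
  have hle (j : ι) : g ≤ v j := fun i => (hg i).trans_le (Nat.sInf_le ⟨j, rfl⟩)
  refine ⟨fun j => v j - g, funext fun j => (add_tsub_cancel_of_le (hle j)).symm, fun i => ?_⟩
  obtain ⟨j, hj⟩ := Nat.sInf_mem (Set.range_nonempty fun j => v j i)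
  exact ⟨j, by simp [hg, ← hj]⟩

theorem height_one_factor_depth_general (K : Type) [Field K] (n q : ℕ)
    (v : Fin q → Fin n →₀ ℕ) (hv : AntichainFam v)
    (I : Ideal (MvPolynomial (Fin n) K)) (hI : I = monIdeal K v)
    (hnp : ¬ Submodule.IsPrincipal I)
    (g : Fin n →₀ ℕ)
    (hg : g = Finsupp.equivFunOnFinite.symm fun i => sInf (Set.range fun j => v j i)) :
    ∃ (q' : ℕ) (u : Fin q' → Fin n →₀ ℕ), AntichainFam u ∧
      (2 : ℕ∞) ≤ heightOf (monIdeal K u) ∧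
      I = Ideal.span {(monomial g (1 : K) : MvPolynomial (Fin n) K)} * monIdeal K u ∧
      depthQuot K n I = depthQuot K n (monIdeal K u) ∧
      monIdeal K (sgnExp u) = monIdeal K (sgnExp v) := by
  subst hI
  have : Nonempty (Fin q) := by
    by_contra hempty
    rw [not_nonempty_iff] at hempty
    have hbot : monIdeal K v = ⊥ := by simp [monIdeal]
    exact hnp (hbot ▸ bot_isPrincipal)
  obtain ⟨u, rfl, hu⟩ := exists_eq_add_of_eq_sInf fun i => DFunLike.congr_fun hg i
  have hfactor : monIdeal K (fun j => g + u j) = Ideal.span {monomial g 1} * monIdeal K u :=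
    span_range_monomial_add u g
  have monomial_mem (j : Fin q) : monomial (u j) (1 : K) ∈ monIdeal K u :=
    Ideal.subset_span ⟨j, rfl⟩
  have hu_ne (j : Fin q) : u j ≠ 0 := fun hj => hnp <| by
    have htop : monIdeal K u = ⊤ := by
      simpa [hj, Ideal.eq_top_iff_one] using monomial_mem j
    rw [hfactor, htop, Ideal.mul_top]
    exact ⟨_, rfl⟩
  have hL : monIdeal K u ≠ ⊥ := fun h => by
    simpa [h] using monomial_mem (Classical.arbitrary _)
  refine ⟨q, u, fun j k hjk => hv j k (add_le_add_right hjk g),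
    two_le_heightOf_span_range_monomial hu, hfactor, ?_, by rw [sgnExp_add]⟩
  rw [hfactor]
  exact depthQuot_span_singleton_mul hL (span_range_monomial_le_idealOfVars hu_ne) (by simp)

/-- **Signature invariants of monomial ideals** (Proposition: reduction of height-one
ideals, depth).  Let `I` be a monomial ideal of `R = K[x_1,…,x_n]` of height `1` that is
not principal, with minimal monomial generating set `G(I) = {x^{v_1},…,x^{v_q}}`, and
let `f = x^g` be the greatest common divisor of the monomials in `G(I)` (so
`g i = min_j (v j) i`).  Then there is a monomial ideal `L` of height at least `2` such
that `I = f·L`, `depth(R/I) = depth(R/L)` and `sgn(I) = sgn(L)`. -/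
theorem height_one_factor_depth (K : Type) [Field K] (n q : ℕ)
    (v : Fin q → Fin n →₀ ℕ) (hv : AntichainFam v)
    (I : Ideal (MvPolynomial (Fin n) K)) (hI : I = monIdeal K v)
    (hnp : ¬ Submodule.IsPrincipal I) (hht : heightOf I = 1)
    (g : Fin n →₀ ℕ)
    (hg : g = Finsupp.equivFunOnFinite.symm fun i => sInf (Set.range fun j => v j i)) :
    ∃ (q' : ℕ) (u : Fin q' → Fin n →₀ ℕ), AntichainFam u ∧
      (2 : ℕ∞) ≤ heightOf (monIdeal K u) ∧
      I = Ideal.span {(monomial g (1 : K) : MvPolynomial (Fin n) K)} * monIdeal K u ∧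
      depthQuot K n I = depthQuot K n (monIdeal K u) ∧
      monIdeal K (sgnExp u) = monIdeal K (sgnExp v) := by
  exact height_one_factor_depth_general K n q v hv I hI hnp g hg
end

section
/- Let I ⊆ R = K[x_1,…,x_n] be a monomial ideal of height 1 that is not a principal ideal, and let f be the greatest common divisor of the monomials in G(I). Then there is a monomial ideal L of R with ht(L) ≥ 2 such that I = f·L, reg(R/I) = reg(R/L) + deg(f), and sgn(I) = sgn(L). -/
open MvPolynomial

/-- Basis (index) type of the `k`-th free module `F_k = ⊕_j R(-j)^{b k j}` of a graded
free resolution: a basis element is a pair `(j, t)` where `j` is its degree shift. -/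
def resBas (b : ℕ → ℕ → ℕ) (k : ℕ) : Type := Σ j : ℕ, Fin (b k j)

/-- The `R`-linear map `(α →₀ R) → (β →₀ R)` determined by the matrix whose row at the
basis element `e : α` is `D e`. -/
noncomputable def resMap {R : Type*} [CommRing R] {α β : Type*}
    (D : α → (β →₀ R)) : (α →₀ R) →ₗ[R] (β →₀ R) :=
  Finsupp.linearCombination R D

/-- A minimal graded free resolution `0 → F_g → ⋯ → F_1 → F_0 = R → R/I → 0` of `R/I`
over the standard graded polynomial ring `R = K[x_1,…,x_n]`, where
`F_k = ⊕_j R(-j)^{b k j}`.  The differentials are graded of degree `0`: the matrix entry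
from a basis element with shift `j` to one with shift `j'` is homogeneous of degree
`j - j'`; minimality holds since all (nonzero) entries have `j' < j`, hence positive
degree, i.e. lie in the graded maximal ideal. -/
structure MinFreeRes (K : Type) [Field K] (n : ℕ)
    (I : Ideal (MvPolynomial (Fin n) K)) where
  /-- the length `g` of the resolution -/
  len : ℕ
  /-- the graded Betti numbers: `F_k = ⊕_j R(-j)^{b k j}` -/
  b : ℕ → ℕ → ℕ
  /-- `F_0 = R` (one copy, no shift) -/
  hb0 : ∀ j, b 0 j = if j = 0 then 1 else 0
  /-- the resolution stops at homological degree `len` -/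
  htop : ∀ k, len < k → ∀ j, b k j = 0
  /-- there are only finitely many nonzero Betti numbers -/
  hfin : (Function.support fun kj : ℕ × ℕ => b kj.1 kj.2).Finite
  /-- the matrices of the differentials `d_{k+1} : F_{k+1} → F_k` -/
  D : ∀ k : ℕ, resBas b (k + 1) → (resBas b k →₀ MvPolynomial (Fin n) K)
  /-- gradedness and minimality of the differentials -/
  hhom : ∀ k e e', D k e e' = 0 ∨
    (e'.1 < e.1 ∧ (D k e e').IsHomogeneous (e.1 - e'.1))
  /-- exactness at `F_k` for `k ≥ 1`; taking `k = len` this also forces injectivity of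
  the last differential, since `F_k = 0` for `k > len` -/
  hexact : ∀ k, LinearMap.range (resMap (D (k + 1))) = LinearMap.ker (resMap (D k))
  /-- exactness at `F_0`, the augmentation `F_0 = R → R/I` being the quotient map -/
  hexact0 : LinearMap.range (resMap (D 0)) =
    LinearMap.ker (Finsupp.linearCombination (MvPolynomial (Fin n) K)
      (fun _ : resBas b 0 => (1 : MvPolynomial (Fin n) K ⧸ I)))

/-- The Castelnuovo–Mumford regularity of `R/I`, computed from a minimal graded free
resolution: `reg(R/I) = max { j - k : b k j ≠ 0 }`. -/
noncomputable def MinFreeRes.reg {K : Type} [Field K] {n : ℕ}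
    {I : Ideal (MvPolynomial (Fin n) K)} (F : MinFreeRes K n I) : ℤ :=
  sSup { d : ℤ | ∃ k j : ℕ, F.b k j ≠ 0 ∧ d = (j : ℤ) - (k : ℤ) }

/-!
Dividing the generators `x^{v j}` by their greatest common divisor `f = x^g` leaves exponent
vectors `u j` with a zero in every row.  Hence no prime element divides all of
`L = (x^{u 1}, …, x^{u q})`, which in a factorial ring means that `L` has height at least `2`, and
the entries of each row keep their relative order, so the signatures agree.

For the regularity, multiplying the first differential of a minimal resolution of `R/L` by `f` and
raising all shifts in positive homological degree by `deg f` gives a minimal graded complex over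
`F_0 = R` whose first differential has image `f·L = I`.  Graded chain maps between two such
complexes that lift the identity of `F_0` compose to a map homotopic to the identity, hence
congruent to it modulo the maximal ideal, so that both complexes have the same shifts.
-/

section Lifting

theorem exists_seq_of_forall_exists_step {T : ℕ → Sort*} {r : ∀ k, T k → T (k + 1) → Prop}
    (t₀ : T 0) (h : ∀ k t, ∃ t', r k t t') :
    ∃ t : ∀ k, T k, t 0 = t₀ ∧ ∀ k, r k (t k) (t (k + 1)) := by
  choose next hnext using h
  exact ⟨fun k => Nat.rec t₀ next k, rfl, fun k => hnext k _⟩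

theorem exists_comp_eq_of_range_le {A P M N : Type*} [Semiring A] [AddCommMonoid P]
    [AddCommMonoid M] [AddCommMonoid N] [Module A P] [Module A M] [Module A N]
    [Module.Projective A P] {f : M →ₗ[A] N} {g : P →ₗ[A] N} (h : g.range ≤ f.range) :
    ∃ φ : P →ₗ[A] M, f ∘ₗ φ = g := by
  obtain ⟨φ, hφ⟩ := Module.projective_lifting_property f.rangeRestrict
    (g.codRestrict (f.range) fun x => h ⟨x, rfl⟩) f.surjective_rangeRestrict
  exact ⟨φ, LinearMap.ext fun x => congrArg Subtype.val (LinearMap.congr_fun hφ x)⟩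

variable {A : Type*} [CommRing A] {P : ℕ → Type*} [∀ k, AddCommGroup (P k)]
  [∀ k, Module A (P k)] [∀ k, Module.Projective A (P (k + 1))]
  {d : ∀ k, P (k + 1) →ₗ[A] P k} {χ : ∀ k, P k →ₗ[A] P k}

theorem exists_homotopy_id (hd : ∀ k, (d (k + 1)).range = (d k).ker) (hχ₀ : χ 0 = LinearMap.id)
    (hχ : ∀ k, d k ∘ₗ χ (k + 1) = χ k ∘ₗ d k) :
    ∃ s : ∀ k, P k →ₗ[A] P (k + 1),
      ∀ k, χ (k + 1) - LinearMap.id = d (k + 1) ∘ₗ s (k + 1) + s k ∘ₗ d k := by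
  have dd (k) (x) : d k (d (k + 1) x) = 0 := (hd k).le ⟨x, rfl⟩
  let T k := {s : P k →ₗ[A] P (k + 1) // ∀ x, d k (s (d k x)) = χ k (d k x) - d k x}
  have step (k) (s : T k) :
      ∃ s' : T (k + 1), χ (k + 1) - LinearMap.id = d (k + 1) ∘ₗ s'.1 + s.1 ∘ₗ d k := by
    have hrange : (χ (k + 1) - LinearMap.id - s.1 ∘ₗ d k).range ≤ (d (k + 1)).range := by
      rintro _ ⟨x, rfl⟩
      have hx : d k (χ (k + 1) x) = χ k (d k x) := LinearMap.congr_fun (hχ k) x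
      simp [hd, hx, s.2]
    obtain ⟨s', hs'⟩ := exists_comp_eq_of_range_le hrange
    refine ⟨⟨s', fun x => ?_⟩, by rw [hs', sub_add_cancel]⟩
    simpa [dd] using LinearMap.congr_fun hs' (d (k + 1) x)
  obtain ⟨s, -, hs⟩ := exists_seq_of_forall_exists_step (T := T) ⟨0, by simp [hχ₀]⟩ step
  exact ⟨fun k => (s k).1, hs⟩

theorem sub_mem_smul_top_of_chainMap {𝔪 : Ideal A} (hd : ∀ k, (d (k + 1)).range = (d k).ker)
    (hmin : ∀ k, (d k).range ≤ 𝔪 • ⊤) (hχ₀ : χ 0 = LinearMap.id)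
    (hχ : ∀ k, d k ∘ₗ χ (k + 1) = χ k ∘ₗ d k) (k : ℕ) (x : P k) :
    χ k x - x ∈ 𝔪 • (⊤ : Submodule A (P k)) := by
  obtain ⟨s, hs⟩ := exists_homotopy_id hd hχ₀ hχ
  cases k with
  | zero => simp [hχ₀]
  | succ k =>
    have hx : χ (k + 1) x - x = d (k + 1) (s (k + 1) x) + s k (d k x) :=
      LinearMap.congr_fun (hs k) x
    rw [hx]
    exact add_mem (hmin _ ⟨_, rfl⟩) (Submodule.smul_top_le_comap_smul_top 𝔪 (s k) (hmin k ⟨x, rfl⟩))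

end Lifting

theorem mem_ideal_smul_top_finsupp_iff {A ι : Type*} [CommRing A] {𝔪 : Ideal A} {x : ι →₀ A} :
    x ∈ 𝔪 • (⊤ : Submodule A (ι →₀ A)) ↔ ∀ i, x i ∈ 𝔪 := by
  refine ⟨fun hx i => ?_, fun hx => ?_⟩
  · simpa using Submodule.smul_top_le_comap_smul_top 𝔪 (Finsupp.lapply i : (ι →₀ A) →ₗ[A] A) hx
  · rw [← Finsupp.sum_single x]
    refine Submodule.sum_mem _ fun i _ => ?_
    rw [← mul_one (x i), ← smul_eq_mul, ← Finsupp.smul_single]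
    exact Submodule.smul_mem_smul (hx i) Submodule.mem_top

section GradedMaps

variable {σ R α β γ : Type*} [CommRing R]

/-- The elements of the graded free module `⊕_c R[σ](-deg c)` all of whose homogeneous
components have degree in `S`.  For `S = {j}` this is the homogeneous part of degree `j`. -/
def degreeSupported (σ R : Type*) [CommRing R] (deg : β → ℕ) (S : Set ℕ) :
    Submodule R (β →₀ MvPolynomial σ R) where
  carrier := {x | ∀ c m, coeff m (x c) ≠ 0 → m.degree + deg c ∈ S}
  zero_mem' := by simp
  add_mem' {x y} hx hy c m h := by
    by_cases hxm : coeff m (x c) = 0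
    · exact hy c m (by simpa [hxm] using h)
    · exact hx c m hxm
  smul_mem' r x hx c m h := hx c m fun h0 => h (by simp [h0])

theorem single_mem_degreeSupported {deg : β → ℕ} {S : Set ℕ} {c : β} {p : MvPolynomial σ R}
    (h : ∀ m, coeff m p ≠ 0 → m.degree + deg c ∈ S) :
    Finsupp.single c p ∈ degreeSupported σ R deg S := by
  classical
  intro c' m hm
  rw [Finsupp.single_apply] at hm
  split_ifs at hm with hc
  · exact hc ▸ h m hm
  · simp at hm

theorem isCompl_degreeSupported_compl (deg : β → ℕ) (S : Set ℕ) :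
    IsCompl (degreeSupported σ R deg S) (degreeSupported σ R deg Sᶜ) := by
  constructor
  · rw [Submodule.disjoint_def]
    intro x hx hx'
    ext c m
    by_contra hne
    exact hx' c m hne (hx c m hne)
  · rw [codisjoint_iff_le_sup]
    rintro x -
    induction x using Finsupp.induction_linear with
    | zero => exact zero_mem _
    | add x y hx hy => exact add_mem hx hy
    | single c p =>
      induction p using MvPolynomial.induction_on' with
      | monomial m r =>
        have hmono {T : Set ℕ} (h : m.degree + deg c ∈ T) :
            Finsupp.single c (monomial m r) ∈ degreeSupported σ R deg T := by
          classical
          refine single_mem_degreeSupported fun m' hm' => ?_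
          obtain rfl : m = m' := of_not_not fun hne => hm' (by rw [coeff_monomial, if_neg hne])
          exact h
        by_cases h : m.degree + deg c ∈ S
        · exact Submodule.mem_sup_left (hmono h)
        · exact Submodule.mem_sup_right (hmono h)
      | add p q hp hq =>
        rw [Finsupp.single_add]
        exact add_mem hp hq

/-- An `R[σ]`-linear map `⊕_b R[σ](-degβ b) → ⊕_c R[σ](-degγ c)` which is homogeneous of
degree `0`, tested on the basis. -/
def IsGradedMap (degβ : β → ℕ) (degγ : γ → ℕ)
    (f : (β →₀ MvPolynomial σ R) →ₗ[MvPolynomial σ R] (γ →₀ MvPolynomial σ R)) : Prop :=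
  ∀ b, f (Finsupp.single b 1) ∈ degreeSupported σ R degγ {degβ b}

namespace IsGradedMap

variable {degα : α → ℕ} {degβ : β → ℕ} {degγ : γ → ℕ}
  {f : (β →₀ MvPolynomial σ R) →ₗ[MvPolynomial σ R] (γ →₀ MvPolynomial σ R)}
  {g : (α →₀ MvPolynomial σ R) →ₗ[MvPolynomial σ R] (γ →₀ MvPolynomial σ R)}

theorem map_mem (hf : IsGradedMap degβ degγ f) {S : Set ℕ} {x : β →₀ MvPolynomial σ R}
    (hx : x ∈ degreeSupported σ R degβ S) : f x ∈ degreeSupported σ R degγ S := by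
  classical
  rw [← Finsupp.sum_single x, map_finsuppSum]
  refine Submodule.sum_mem _ fun b _ c m hm => ?_
  have hsmul : f (Finsupp.single b (x b)) = x b • f (Finsupp.single b 1) := by simp [← map_smul]
  beta_reduce at hm
  rw [hsmul, Finsupp.smul_apply, smul_eq_mul, coeff_mul] at hm
  obtain ⟨⟨p, r⟩, hpr, hne⟩ := Finset.exists_ne_zero_of_sum_ne_zero hm
  obtain rfl : p + r = m := Finset.HasAntidiagonal.mem_antidiagonal.1 hpr
  have hr : r.degree + degγ c = degβ b := hf b c r (right_ne_zero_of_mul hne)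
  rw [map_add, add_assoc, hr]
  exact hx b p (left_ne_zero_of_mul hne)

theorem comp {h : (α →₀ MvPolynomial σ R) →ₗ[MvPolynomial σ R] (β →₀ MvPolynomial σ R)}
    (hf : IsGradedMap degβ degγ f) (hh : IsGradedMap degα degβ h) :
    IsGradedMap degα degγ (f ∘ₗ h) :=
  fun a => hf.map_mem (hh a)

theorem smul (hf : IsGradedMap degβ degγ f) {p : MvPolynomial σ R} {a : ℕ}
    (hp : p.IsHomogeneous a) : IsGradedMap (fun b => degβ b + a) degγ (p • f) := by
  intro b
  have hfb : (p • f) (Finsupp.single b 1) = f (Finsupp.single b p) := by simp [← map_smul]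
  rw [hfb]
  refine hf.map_mem (single_mem_degreeSupported fun m hm => ?_)
  rw [Set.mem_singleton_iff, add_comm, ← hp hm, Finsupp.degree_eq_weight_one]
  rfl

theorem exists_preimage_mem (hf : IsGradedMap degβ degγ f) {S : Set ℕ}
    {y : γ →₀ MvPolynomial σ R} (hy : y ∈ degreeSupported σ R degγ S) (hyf : y ∈ f.range) :
    ∃ x ∈ degreeSupported σ R degβ S, f x = y := by
  obtain ⟨x, rfl⟩ := hyf
  obtain ⟨z, hz, z', hz', rfl⟩ := Submodule.mem_sup.1
    ((isCompl_degreeSupported_compl degβ S).sup_eq_top.ge (Submodule.mem_top (x := x)))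
  have hfz' : f z' ∈ degreeSupported σ R degγ S := by
    simpa using sub_mem hy (hf.map_mem hz)
  have h0 : f z' = 0 := Submodule.disjoint_def.1
    (isCompl_degreeSupported_compl degγ S).disjoint _ hfz' (hf.map_mem hz')
  exact ⟨z, hz, by rw [map_add, h0, add_zero]⟩

theorem exists_comp_eq (hf : IsGradedMap degβ degγ f) (hg : IsGradedMap degα degγ g)
    (h : g.range ≤ f.range) : ∃ φ, IsGradedMap degα degβ φ ∧ f ∘ₗ φ = g := by
  choose t ht hft using fun a => hf.exists_preimage_mem (hg a) (h ⟨_, rfl⟩)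
  refine ⟨Finsupp.linearCombination _ t, fun a => by simpa using ht a, ?_⟩
  ext1 a
  exact LinearMap.ext_ring (by simpa using hft a)

end IsGradedMap

end GradedMaps

/-- A complex `⋯ → F_2 → F_1 → F_0` of graded free modules `F_k = ⊕_e R[σ](-deg k e)` over
`R[σ]`, exact except possibly at `F_0`, whose differentials are graded of degree `0` and
minimal, i.e. have entries without constant term. -/
structure MinGradedComplex (σ R : Type*) [CommRing R] where
  basis : ℕ → Type*
  deg : ∀ k, basis k → ℕ
  d : ∀ k, (basis (k + 1) →₀ MvPolynomial σ R) →ₗ[MvPolynomial σ R]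
    (basis k →₀ MvPolynomial σ R)
  isGradedMap_d : ∀ k, IsGradedMap (deg (k + 1)) (deg k) (d k)
  range_d_le : ∀ k, (d k).range ≤ RingHom.ker (constantCoeff (σ := σ) (R := R)) • ⊤
  range_d_succ : ∀ k, (d (k + 1)).range = (d k).ker

namespace MinGradedComplex

variable {σ R : Type*} [CommRing R] (F G : MinGradedComplex σ R)

theorem exists_gradedChainMap
    {φ₀ : (F.basis 0 →₀ MvPolynomial σ R) →ₗ[MvPolynomial σ R] (G.basis 0 →₀ MvPolynomial σ R)}
    (hφ₀ : IsGradedMap (F.deg 0) (G.deg 0) φ₀) (h : (F.d 0).range.map φ₀ ≤ (G.d 0).range) :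
    ∃ φ : ∀ k, (F.basis k →₀ MvPolynomial σ R) →ₗ[MvPolynomial σ R]
        (G.basis k →₀ MvPolynomial σ R),
      φ 0 = φ₀ ∧ (∀ k, IsGradedMap (F.deg k) (G.deg k) (φ k)) ∧
        ∀ k, G.d k ∘ₗ φ (k + 1) = φ k ∘ₗ F.d k := by
  let T k := {φ : (F.basis k →₀ MvPolynomial σ R) →ₗ[MvPolynomial σ R]
      (G.basis k →₀ MvPolynomial σ R) //
    IsGradedMap (F.deg k) (G.deg k) φ ∧ (F.d k).range.map φ ≤ (G.d k).range}
  have step (k) (φ : T k) : ∃ φ' : T (k + 1), G.d k ∘ₗ φ'.1 = φ.1 ∘ₗ F.d k := by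
    obtain ⟨φ, hφ, hrange⟩ := φ
    obtain ⟨φ', hφ', hcomm⟩ := (G.isGradedMap_d k).exists_comp_eq
      (hφ.comp (F.isGradedMap_d k)) ((LinearMap.range_comp _ _).trans_le hrange)
    refine ⟨⟨φ', hφ', ?_⟩, hcomm⟩
    rw [F.range_d_succ, G.range_d_succ, Submodule.map_le_iff_le_comap]
    intro x hx
    have hx' : G.d k (φ' x) = φ (F.d k x) := LinearMap.congr_fun hcomm x
    simp [hx', LinearMap.mem_ker.1 hx]
  obtain ⟨φ, h0, hcomm⟩ := exists_seq_of_forall_exists_step (T := T) ⟨φ₀, hφ₀, h⟩ step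
  exact ⟨fun k => (φ k).1, congrArg Subtype.val h0, fun k => (φ k).2.1, hcomm⟩

variable {F G} [Nontrivial R]

theorem exists_deg_eq
    {φ₀ : (F.basis 0 →₀ MvPolynomial σ R) →ₗ[MvPolynomial σ R] (G.basis 0 →₀ MvPolynomial σ R)}
    {ψ₀ : (G.basis 0 →₀ MvPolynomial σ R) →ₗ[MvPolynomial σ R] (F.basis 0 →₀ MvPolynomial σ R)}
    (hφ₀ : IsGradedMap (F.deg 0) (G.deg 0) φ₀) (hφ : (F.d 0).range.map φ₀ ≤ (G.d 0).range)
    (hψ₀ : IsGradedMap (G.deg 0) (F.deg 0) ψ₀) (hψ : (G.d 0).range.map ψ₀ ≤ (F.d 0).range)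
    (hψφ : ψ₀ ∘ₗ φ₀ = LinearMap.id) (k : ℕ) (i : F.basis k) :
    ∃ j : G.basis k, G.deg k j = F.deg k i := by
  obtain ⟨φ, rfl, hφgr, hφd⟩ := F.exists_gradedChainMap G hφ₀ hφ
  obtain ⟨ψ, rfl, -, hψd⟩ := G.exists_gradedChainMap F hψ₀ hψ
  have hcomm (k) : F.d k ∘ₗ (ψ (k + 1) ∘ₗ φ (k + 1)) = (ψ k ∘ₗ φ k) ∘ₗ F.d k := by
    rw [← LinearMap.comp_assoc, hψd, LinearMap.comp_assoc, hφd, LinearMap.comp_assoc]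
  have hsub := sub_mem_smul_top_of_chainMap (χ := fun k => ψ k ∘ₗ φ k)
    F.range_d_succ F.range_d_le hψφ hcomm k (Finsupp.single i 1)
  have hφi : φ k (Finsupp.single i 1) ∉ RingHom.ker (constantCoeff (σ := σ) (R := R)) •
      (⊤ : Submodule (MvPolynomial σ R) (G.basis k →₀ MvPolynomial σ R)) := fun hmem => by
    have hψφi : (ψ k ∘ₗ φ k) (Finsupp.single i 1) ∈
        RingHom.ker (constantCoeff (σ := σ) (R := R)) •
          (⊤ : Submodule (MvPolynomial σ R) (F.basis k →₀ MvPolynomial σ R)) :=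
      Submodule.smul_top_le_comap_smul_top _ (ψ k) hmem
    have hi := sub_mem hψφi hsub
    simpa using mem_ideal_smul_top_finsupp_iff.1 hi i
  obtain ⟨j, hj⟩ := not_forall.1 (mt mem_ideal_smul_top_finsupp_iff.2 hφi)
  exact ⟨j, by simpa using hφgr k i j 0 hj⟩

end MinGradedComplex

namespace MinFreeRes

variable {K : Type} [Field K] {n : ℕ} {I L : Ideal (MvPolynomial (Fin n) K)}

theorem exists_fst_eq_iff (F : MinFreeRes K n I) {k j : ℕ} :
    (∃ e : resBas F.b k, e.1 = j) ↔ F.b k j ≠ 0 := by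
  refine ⟨?_, fun h => ⟨⟨j, 0, Nat.pos_of_ne_zero h⟩, rfl⟩⟩
  rintro ⟨⟨j, t⟩, rfl⟩
  exact t.pos.ne'

theorem fst_eq_zero (F : MinFreeRes K n I) (e : resBas F.b 0) : e.1 = 0 := by
  have h := F.exists_fst_eq_iff.1 ⟨e, rfl⟩
  simpa [F.hb0] using h

instance (F : MinFreeRes K n I) : Unique (resBas F.b 0) where
  default := ⟨0, 0, by simp [F.hb0]⟩
  uniq := by
    rintro ⟨j, t⟩
    obtain rfl : j = 0 := F.fst_eq_zero ⟨j, t⟩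
    have : Subsingleton (Fin (F.b 0 0)) := by rw [F.hb0, if_pos rfl]; infer_instance
    congr 1
    exact Subsingleton.elim _ _

theorem mem_range_resMap_zero (F : MinFreeRes K n I)
    {x : resBas F.b 0 →₀ MvPolynomial (Fin n) K} :
    x ∈ (resMap (F.D 0)).range ↔ x default ∈ I := by
  rw [F.hexact0, LinearMap.mem_ker, Finsupp.linearCombination_unique,
    ← Ideal.Quotient.eq_zero_iff_mem, ← Ideal.Quotient.algebraMap_eq,
    Algebra.algebraMap_eq_smul_one]

theorem isGradedMap_resMap (F : MinFreeRes K n I) (k : ℕ) :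
    IsGradedMap (fun e : resBas F.b (k + 1) => e.1) (fun e : resBas F.b k => e.1)
      (resMap (F.D k)) := by
  intro e c m hm
  rw [resMap, Finsupp.linearCombination_single, one_smul] at hm
  rcases F.hhom k e c with h | ⟨hlt, hhom⟩
  · simp [h] at hm
  · have hdeg : m.degree = e.1 - c.1 := by
      rw [Finsupp.degree_eq_weight_one]
      exact hhom hm
    change m.degree + c.1 = e.1
    omega

theorem range_resMap_le (F : MinFreeRes K n I) (k : ℕ) :
    (resMap (F.D k)).range ≤ RingHom.ker (constantCoeff (σ := Fin n) (R := K)) • ⊤ := by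
  rw [resMap, Finsupp.range_linearCombination, Submodule.span_le]
  rintro _ ⟨e, rfl⟩
  refine mem_ideal_smul_top_finsupp_iff.2 fun c => ?_
  rcases F.hhom k e c with h | ⟨hlt, hhom⟩
  · simp [h]
  · exact hhom.coeff_eq_zero (by simp; omega)

/-- The resolution of `R/fL` obtained from a resolution `F` of `R/L`, as a complex: the first
differential is multiplied by the nonzero homogeneous polynomial `f` of degree `a`, and all
shifts in positive homological degree increase by `a`. -/
noncomputable def mulLeft (F : MinFreeRes K n L) {f : MvPolynomial (Fin n) K} {a : ℕ}
    (hf₀ : f ≠ 0) (hf : f.IsHomogeneous a) : MinGradedComplex (Fin n) K where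
  basis := resBas F.b
  deg
    | 0 => fun e => e.1
    | _ + 1 => fun e => e.1 + a
  d
    | 0 => f • resMap (F.D 0)
    | k + 1 => resMap (F.D (k + 1))
  isGradedMap_d
    | 0 => (F.isGradedMap_resMap 0).smul hf
    | k + 1 => by
      intro e c m hm
      have h : m.degree + c.1 = e.1 := F.isGradedMap_resMap (k + 1) e c m hm
      change m.degree + (c.1 + a) = e.1 + a
      rw [← add_assoc, h]
  range_d_le
    | 0 => by
      rintro _ ⟨x, rfl⟩
      exact Submodule.smul_mem _ f (F.range_resMap_le 0 ⟨x, rfl⟩)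
    | k + 1 => F.range_resMap_le (k + 1)
  range_d_succ
    | 0 => by
      refine (F.hexact 0).trans (Submodule.ext fun x => ?_)
      exact (smul_eq_zero_iff_right hf₀).symm
    | k + 1 => F.hexact (k + 1)

section MulLeft

variable (F : MinFreeRes K n I) (G : MinFreeRes K n L) {f g : MvPolynomial (Fin n) K}

theorem mem_range_smul_resMap_zero {x : resBas F.b 0 →₀ MvPolynomial (Fin n) K} :
    x ∈ (f • resMap (F.D 0)).range ↔ x default ∈ Ideal.span {f} * I := by
  rw [Ideal.mem_span_singleton_mul]
  constructor
  · rintro ⟨y, rfl⟩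
    exact ⟨_, F.mem_range_resMap_zero.1 ⟨y, rfl⟩, rfl⟩
  · rintro ⟨z, hz, hzx⟩
    obtain ⟨y, hy⟩ := F.mem_range_resMap_zero (x := Finsupp.single default z) |>.2 (by simpa)
    refine ⟨y, Finsupp.unique_ext ?_⟩
    simpa [hy] using hzx

/-- The identification of the modules `F_0 = R = G_0` of two resolutions. -/
noncomputable def zeroEquiv : (resBas F.b 0 →₀ MvPolynomial (Fin n) K) ≃ₗ[MvPolynomial (Fin n) K]
    (resBas G.b 0 →₀ MvPolynomial (Fin n) K) :=
  Finsupp.domLCongr (Equiv.ofUnique _ _)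

theorem isGradedMap_zeroEquiv :
    IsGradedMap (fun e : resBas F.b 0 => e.1) (fun e : resBas G.b 0 => e.1)
      (zeroEquiv F G).toLinearMap := by
  intro e
  have h : zeroEquiv F G (Finsupp.single e 1) = Finsupp.single default 1 :=
    Finsupp.domLCongr_single _ _ _
  rw [LinearEquiv.coe_coe, h]
  refine single_mem_degreeSupported fun m hm => ?_
  obtain rfl : m = 0 := of_not_not fun hne => hm (by simp [coeff_one, Ne.symm hne])
  simp [F.fst_eq_zero, G.fst_eq_zero]

theorem map_zeroEquiv_range_le (h : Ideal.span {f} * I ≤ Ideal.span {g} * L) :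
    (f • resMap (F.D 0)).range.map (zeroEquiv F G).toLinearMap ≤ (g • resMap (G.D 0)).range := by
  rw [Submodule.map_le_iff_le_comap]
  intro x hx
  have hx' : zeroEquiv F G x default = x default := rfl
  rw [Submodule.mem_comap, mem_range_smul_resMap_zero, LinearEquiv.coe_coe, hx']
  exact h ((mem_range_smul_resMap_zero F).1 hx)

theorem exists_b_succ_ne_zero {a b : ℕ} (hf₀ : f ≠ 0) (hf : f.IsHomogeneous a) (hg₀ : g ≠ 0)
    (hg : g.IsHomogeneous b) (h : Ideal.span {f} * I = Ideal.span {g} * L) {k j : ℕ}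
    (hj : F.b (k + 1) j ≠ 0) : ∃ j', G.b (k + 1) j' ≠ 0 ∧ j' + b = j + a := by
  obtain ⟨e, rfl⟩ := F.exists_fst_eq_iff.2 hj
  have hid : (zeroEquiv G F).toLinearMap ∘ₗ (zeroEquiv F G).toLinearMap = LinearMap.id :=
    LinearMap.ext fun x => Finsupp.unique_ext rfl
  obtain ⟨e', he'⟩ := MinGradedComplex.exists_deg_eq (F := F.mulLeft hf₀ hf) (G := G.mulLeft hg₀ hg)
    (isGradedMap_zeroEquiv F G) (map_zeroEquiv_range_le F G h.le)
    (isGradedMap_zeroEquiv G F) (map_zeroEquiv_range_le G F h.ge) hid (k + 1) e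
  exact ⟨e'.1, G.exists_fst_eq_iff.1 ⟨e', rfl⟩, he'⟩

theorem b_succ_ne_zero_iff {a : ℕ} (hf₀ : f ≠ 0) (hf : f.IsHomogeneous a)
    (h : I = Ideal.span {f} * L) {k j : ℕ} :
    F.b (k + 1) j ≠ 0 ↔ ∃ j', G.b (k + 1) j' ≠ 0 ∧ j' + a = j := by
  have h1 : Ideal.span {1} * I = Ideal.span {f} * L := by
    rw [Ideal.span_singleton_one, Ideal.top_mul, h]
  constructor
  · exact exists_b_succ_ne_zero F G one_ne_zero (isHomogeneous_one _ _) hf₀ hf h1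
  · rintro ⟨j', hj', rfl⟩
    obtain ⟨j, hj, rfl⟩ :=
      exists_b_succ_ne_zero G F hf₀ hf one_ne_zero (isHomogeneous_one _ _) h1.symm hj'
    exact hj

end MulLeft

theorem exists_b_one_ne_zero (F : MinFreeRes K n I) (hI : I ≠ ⊥) : ∃ j, 0 < j ∧ F.b 1 j ≠ 0 := by
  obtain ⟨e, he⟩ : ∃ e, F.D 0 e ≠ 0 := by
    by_contra! hD
    refine hI ((Submodule.eq_bot_iff I).2 fun x hx => ?_)
    obtain ⟨y, hy⟩ := F.mem_range_resMap_zero (x := Finsupp.single default x) |>.2 (by simpa)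
    simpa [resMap, Finsupp.linearCombination_apply, hD, eq_comm] using hy
  obtain ⟨c, hc⟩ := Finsupp.ne_iff.1 he
  have hlt : c.1 < e.1 := ((F.hhom 0 e c).resolve_left hc).1
  exact ⟨e.1, (Nat.zero_le _).trans_lt hlt, F.exists_fst_eq_iff.1 ⟨e, rfl⟩⟩

theorem isGreatest_reg (F : MinFreeRes K n I) (hI : I ≠ ⊥) :
    IsGreatest {d : ℤ | ∃ k j : ℕ, F.b (k + 1) j ≠ 0 ∧ d = j - (k + 1 : ℕ)} F.reg := by
  have hbdd : BddAbove {d : ℤ | ∃ k j : ℕ, F.b k j ≠ 0 ∧ d = j - k} := by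
    refine ((F.hfin.image fun kj : ℕ × ℕ => (kj.2 : ℤ) - kj.1).subset ?_).bddAbove
    rintro _ ⟨k, j, hj, rfl⟩
    exact ⟨(k, j), hj, rfl⟩
  have hle {k j : ℕ} (h : F.b k j ≠ 0) : (j : ℤ) - k ≤ F.reg := le_csSup hbdd ⟨k, j, h, rfl⟩
  refine ⟨?_, ?_⟩
  · obtain ⟨j₁, hj₁, hb₁⟩ := F.exists_b_one_ne_zero hI
    obtain ⟨k, j, hj, hreg⟩ : F.reg ∈ {d : ℤ | ∃ k j : ℕ, F.b k j ≠ 0 ∧ d = j - k} :=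
      Int.csSup_mem ⟨_, 1, j₁, hb₁, rfl⟩ hbdd
    cases k with
    | zero =>
      obtain rfl : j = 0 := by simpa [F.hb0] using hj
      have hreg₁ := hle hb₁
      exact ⟨0, j₁, hb₁, by omega⟩
    | succ k => exact ⟨k, j, hj, hreg⟩
  · rintro _ ⟨k, j, hj, rfl⟩
    exact hle hj

theorem reg_eq_add (F : MinFreeRes K n I) (G : MinFreeRes K n L) {f : MvPolynomial (Fin n) K}
    {a : ℕ} (hf₀ : f ≠ 0) (hf : f.IsHomogeneous a) (hL : L ≠ ⊥) (h : I = Ideal.span {f} * L) :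
    F.reg = G.reg + a := by
  have hI : I ≠ ⊥ := by simpa [h, Ideal.mul_eq_bot, hf₀] using hL
  refine (F.isGreatest_reg hI).unique ⟨?_, ?_⟩
  · obtain ⟨k, j, hj, hreg⟩ := (G.isGreatest_reg hL).1
    exact ⟨k, j + a, (b_succ_ne_zero_iff F G hf₀ hf h).2 ⟨j, hj, rfl⟩, by omega⟩
  · rintro _ ⟨k, _, hj, rfl⟩
    obtain ⟨j, hj', rfl⟩ := (b_succ_ne_zero_iff F G hf₀ hf h).1 hj
    have hle := (G.isGreatest_reg hL).2 ⟨k, j, hj', rfl⟩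
    omega

end MinFreeRes

section Height

theorem two_le_heightOf {R : Type*} [CommRing R] [IsDomain R] [UniqueFactorizationMonoid R]
    {J : Ideal R} (hJ : J ≠ ⊥) (h : ∀ p, Prime p → ∃ x ∈ J, ¬p ∣ x) : 2 ≤ heightOf J := by
  refine le_iInf₂ fun P (hP : J ≤ P.asIdeal) => ?_
  obtain ⟨p, hpP, hp⟩ := P.isPrime.exists_mem_prime_of_ne_bot (ne_bot_of_le_ne_bot hJ hP)
  let Q : PrimeSpectrum R := ⟨Ideal.span {p}, (Ideal.span_singleton_prime hp.ne_zero).2 hp⟩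
  have hbot : ⊥ < Q := by
    rw [← PrimeSpectrum.asIdeal_lt_asIdeal]
    exact bot_lt_iff_ne_bot.2 (by simpa [Q] using hp.ne_zero)
  have hlt : Q < P := by
    obtain ⟨x, hxJ, hx⟩ := h p hp
    rw [← PrimeSpectrum.asIdeal_lt_asIdeal]
    refine lt_of_le_of_ne ((Ideal.span_singleton_le_iff_mem _).2 hpP) fun hQ => hx ?_
    rw [← Ideal.mem_span_singleton]
    exact hQ.ge (hP hxJ)
  calc
    (2 : ℕ∞) = 0 + 1 + 1 := by norm_num
    _ ≤ Order.height (⊥ : PrimeSpectrum R) + 1 + 1 := by gcongr; exact zero_le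
    _ ≤ Order.height Q + 1 := by gcongr; exact Order.height_add_one_le hbot
    _ ≤ Order.height P := Order.height_add_one_le hlt

theorem exists_associated_X_of_prime_dvd_monomial {σ R : Type*} [CommRing R] [IsDomain R]
    {p : MvPolynomial σ R} (hp : Prime p) {m : σ →₀ ℕ} (h : p ∣ monomial m 1) :
    ∃ i, Associated p (X i) := by
  rw [monomial_eq, C_1, one_mul] at h
  obtain ⟨i, -, hi⟩ := hp.exists_mem_finset_dvd h
  exact ⟨i, hp.irreducible.associated_of_dvd X_prime.irreducible (hp.dvd_of_dvd_pow hi)⟩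

variable (K : Type) [Field K] {n q : ℕ}

theorem monIdeal_ne_bot [Nonempty (Fin q)] (v : Fin q → Fin n →₀ ℕ) : monIdeal K v ≠ ⊥ := by
  simp [monIdeal]

theorem two_le_heightOf_monIdeal [Nonempty (Fin q)] {v : Fin q → Fin n →₀ ℕ}
    (h : ∀ i, ∃ j, v j i = 0) : 2 ≤ heightOf (monIdeal K v) := by
  have hmem (j) : monomial (v j) (1 : K) ∈ monIdeal K v := Ideal.subset_span ⟨j, rfl⟩
  refine two_le_heightOf (monIdeal_ne_bot K v) fun p hp => ?_
  by_contra! hdvd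
  obtain ⟨i, hi⟩ := exists_associated_X_of_prime_dvd_monomial hp
    (hdvd _ (hmem (Classical.arbitrary _)))
  obtain ⟨j, hj⟩ := h i
  have hX : X i ∣ monomial (v j) (1 : K) := hi.dvd_iff_dvd_left.1 (hdvd _ (hmem j))
  simp [X_dvd_monomial, hj] at hX

end Height

section GCD

/-- The exponent vector of the greatest common divisor of the monomials `x^{v j}`.  For an empty
family it is `0`. -/
noncomputable def gcdExp {ι σ : Type*} [Finite σ] (v : ι → σ →₀ ℕ) : σ →₀ ℕ :=
  Finsupp.equivFunOnFinite.symm fun i => sInf (Set.range fun j => v j i)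

theorem gcdExp_le {ι σ : Type*} [Finite σ] (v : ι → σ →₀ ℕ) (j : ι) : gcdExp v ≤ v j :=
  fun _ => Nat.sInf_le ⟨j, rfl⟩

theorem exists_apply_eq_gcdExp {ι σ : Type*} [Finite σ] [Nonempty ι] (v : ι → σ →₀ ℕ) (i : σ) :
    ∃ j, v j i = gcdExp v i :=
  Nat.sInf_mem (Set.range_nonempty fun j => v j i)

variable {n q : ℕ} (g : Fin n →₀ ℕ) (u : Fin q → Fin n →₀ ℕ)

theorem monIdeal_add_left (K : Type) [Field K] :
    monIdeal K (fun j => g + u j) = Ideal.span {monomial g (1 : K)} * monIdeal K u := by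
  rw [monIdeal, monIdeal, Ideal.span_mul_span', Set.singleton_mul, ← Set.range_comp]
  simp [Function.comp_def, monomial_mul]

theorem sgnExp_add_left : sgnExp (fun j => g + u j) = sgnExp u := by
  ext j i
  have himage : (Finset.univ.image fun k => (g + u k) i) =
      (Finset.univ.image fun k => u k i).image (g i + ·) := by
    rw [Finset.image_image]
    rfl
  simp only [sgnExp, Finsupp.coe_equivFunOnFinite_symm]
  rw [himage, Finset.filter_image, Finset.card_image_of_injective _ (add_right_injective (g i))]
  simp

theorem antichainFam_add_left_iff : AntichainFam (fun j => g + u j) ↔ AntichainFam u := by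
  simp [AntichainFam]

end GCD

theorem height_one_factor_reg_general (K : Type) [Field K] (n q : ℕ) (v : Fin q → Fin n →₀ ℕ)
    (hv : AntichainFam v) (hnp : ¬Submodule.IsPrincipal (monIdeal K v)) :
    ∃ u : Fin q → Fin n →₀ ℕ, AntichainFam u ∧
      2 ≤ heightOf (monIdeal K u) ∧
      monIdeal K v = Ideal.span {monomial (gcdExp v) (1 : K)} * monIdeal K u ∧
      (∀ (F : MinFreeRes K n (monIdeal K v)) (G : MinFreeRes K n (monIdeal K u)),
        F.reg = G.reg + (∑ i, gcdExp v i : ℕ)) ∧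
      sgnExp u = sgnExp v := by
  have : Nonempty (Fin q) := by
    by_contra hq
    rw [not_nonempty_iff] at hq
    exact hnp (by rw [monIdeal, Set.range_eq_empty, Ideal.span_empty]; infer_instance)
  obtain ⟨u, hu⟩ : ∃ u : Fin q → Fin n →₀ ℕ, v = fun j => gcdExp v + u j :=
    ⟨fun j => v j - gcdExp v, funext fun j => (add_tsub_cancel_of_le (gcdExp_le v j)).symm⟩
  have hfactor : monIdeal K v = Ideal.span {monomial (gcdExp v) (1 : K)} * monIdeal K u :=
    (congrArg (monIdeal K) hu).trans (monIdeal_add_left _ u K)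
  refine ⟨u, (antichainFam_add_left_iff _ u).1 (hu ▸ hv), ?_, hfactor, fun F G => ?_, ?_⟩
  · refine two_le_heightOf_monIdeal K fun i => ?_
    obtain ⟨j, hj⟩ := exists_apply_eq_gcdExp v i
    have hji : v j i = gcdExp v i + u j i := DFunLike.congr_fun (congrFun hu j) i
    exact ⟨j, by omega⟩
  · rw [← Finsupp.degree_eq_sum]
    exact F.reg_eq_add G (by simp) (isHomogeneous_monomial 1 rfl) (monIdeal_ne_bot K u) hfactor
  · exact (sgnExp_add_left _ u).symm.trans (congrArg sgnExp hu.symm)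

/-- **Signature invariants of monomial ideals** (Proposition: reduction of height-one
ideals, regularity).  Let `I` be a monomial ideal of `R = K[x_1,…,x_n]` of height `1`
that is not principal, with minimal monomial generating set `G(I) = {x^{v_1},…,x^{v_q}}`,
and let `f = x^g` be the greatest common divisor of the monomials in `G(I)` (so
`g i = min_j (v j) i`).  Then there is a monomial ideal `L` of height at least `2` such
that `I = f·L`, `reg(R/I) = reg(R/L) + deg(f)` and `sgn(I) = sgn(L)`, where the
regularity is computed from (any) minimal graded free resolution. -/
theorem height_one_factor_reg (K : Type) [Field K] (n q : ℕ)
    (v : Fin q → Fin n →₀ ℕ) (hv : AntichainFam v)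
    (I : Ideal (MvPolynomial (Fin n) K)) (hI : I = monIdeal K v)
    (hnp : ¬ Submodule.IsPrincipal I) (hht : heightOf I = 1)
    (g : Fin n →₀ ℕ)
    (hg : g = Finsupp.equivFunOnFinite.symm fun i => sInf (Set.range fun j => v j i)) :
    ∃ (q' : ℕ) (u : Fin q' → Fin n →₀ ℕ), AntichainFam u ∧
      (2 : ℕ∞) ≤ heightOf (monIdeal K u) ∧
      I = Ideal.span {(monomial g (1 : K) : MvPolynomial (Fin n) K)} * monIdeal K u ∧
      (∀ (F : MinFreeRes K n I) (G : MinFreeRes K n (monIdeal K u)),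
        F.reg = G.reg + (∑ i, g i : ℕ)) ∧
      monIdeal K (sgnExp u) = monIdeal K (sgnExp v) := by
  subst hI hg
  obtain ⟨u, hu, hht', hfactor, hreg, hsgn⟩ := height_one_factor_reg_general K n q v hv hnp
  exact ⟨q, u, hu, hht', hfactor, hreg, congrArg (monIdeal K) hsgn⟩
end

section
/- In the gap setup, the binomials x_0 − x_1^{q_1 − p} and x_0 − x_1 are both nonzerodivisors on the quotient ring R[x_0]/I_pol. -/
open MvPolynomial

/-!
Modulo a monomial ideal `J`, `x^c f = x^d f` with `c ≠ d` lets one trade `c` for `d` in the exponents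
of `f`: if `x^u` occurs in `f` and `x^(u+c) ∉ J`, then `x^(u+c-d)` also occurs in `f`. Since `f` has
only finitely many terms, each of them is multiplied into `J` by a power of `x^c`, and by symmetry
by a power of `x^d`. Hence `x^c - x^d` is a nonzerodivisor modulo `J` as soon as
`(J : (x^c)^∞) ∩ (J : (x^d)^∞) = J`. For powers of two variables `x_a`, `x_b` this holds when the
degrees of the generators of `J` in `x_a` and `x_b` never vary in opposite directions. In the
polarization, the generators free of `x_0` have `x_1`-degree at most `p`, and the others have
`x_0`-degree one and `x_1`-degree at least `p`.
-/

namespace MonomialIdeal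

variable {σ R : Type*} [CommRing R] {A : Set (σ →₀ ℕ)} {c d u : σ →₀ ℕ} {f : MvPolynomial σ R}

theorem mem_span_iff_forall_mem_upperClosure :
    f ∈ Ideal.span ((monomial · (1 : R)) '' A) ↔ ∀ u ∈ f.support, u ∈ upperClosure A := by
  simp only [mem_ideal_span_monomial_image, mem_upperClosure]

theorem exists_mem_support_add_eq_of_mul_sub_mem
    (hf : f * (monomial c 1 - monomial d 1) ∈ Ideal.span ((monomial · (1 : R)) '' A))
    (hu : u ∈ f.support) (huc : u + c ∉ upperClosure A) : ∃ v ∈ f.support, v + d = u + c := by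
  have hcoeff : coeff (u + c) (f * (monomial c 1 - monomial d 1)) = 0 := by
    by_contra hne
    exact huc (mem_span_iff_forall_mem_upperClosure.1 hf _ (mem_support_iff.2 hne))
  rw [mul_sub, coeff_sub, coeff_mul_monomial, coeff_mul_monomial', mul_one, mul_one,
    sub_eq_zero] at hcoeff
  split_ifs at hcoeff with hd
  · exact ⟨u + c - d, mem_support_iff.2 (hcoeff ▸ mem_support_iff.1 hu), tsub_add_cancel_of_le hd⟩
  · exact absurd hcoeff (mem_support_iff.1 hu)

theorem exists_add_nsmul_mem_upperClosure_of_mul_sub_mem (hcd : c ≠ d)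
    (hf : f * (monomial c 1 - monomial d 1) ∈ Ideal.span ((monomial · (1 : R)) '' A))
    (hu : u ∈ f.support) : ∃ i : ℕ, u + i • c ∈ upperClosure A := by
  by_contra! hnot
  have hchain : ∀ i : ℕ, ∃ v ∈ f.support, v + i • d = u + i • c := by
    intro i
    induction i with
    | zero => exact ⟨u, hu, by simp only [zero_smul]⟩
    | succ i ih =>
      obtain ⟨v, hv, hvi⟩ := ih
      have hvc : v + c + i • d = u + (i + 1) • c := by
        rw [add_right_comm, hvi, add_assoc, succ_nsmul]
      have hvcA : v + c ∉ upperClosure A := fun h =>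
        hnot (i + 1) (hvc ▸ (upperClosure A).upper le_self_add h)
      obtain ⟨v', hv', hv'd⟩ := exists_mem_support_add_eq_of_mul_sub_mem hf hv hvcA
      exact ⟨v', hv', by rw [succ_nsmul', ← add_assoc, hv'd, hvc]⟩
  choose v hv hvi using hchain
  obtain ⟨x, hx⟩ := DFunLike.ne_iff.1 hcd
  have hinj : Function.Injective fun i => (⟨v i, hv i⟩ : f.support) := by
    intro i j hij
    have hvij : v i x = v j x := congrArg (fun w : f.support => w.1 x) hij
    have hi : v i x + i * d x = u x + i * c x := by simpa using DFunLike.congr_fun (hvi i) x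
    have hj : v j x + j * d x = u x + j * c x := by simpa using DFunLike.congr_fun (hvi j) x
    zify at hvij hi hj hx ⊢
    have hprod : ((i : ℤ) - j) * (c x - d x) = 0 := by linear_combination hvij + hj - hi
    exact sub_eq_zero.1 ((mul_eq_zero.1 hprod).resolve_right (sub_ne_zero.2 hx))
  exact not_injective_infinite_finite _ hinj

theorem mk_monomial_sub_monomial_mem_nonZeroDivisors (hcd : c ≠ d)
    (hA : ∀ (u : σ →₀ ℕ) (i j : ℕ),
      u + i • c ∈ upperClosure A → u + j • d ∈ upperClosure A → u ∈ upperClosure A) :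
    Ideal.Quotient.mk (Ideal.span ((monomial · (1 : R)) '' A)) (monomial c 1 - monomial d 1) ∈
      nonZeroDivisors (MvPolynomial σ R ⧸ Ideal.span ((monomial · (1 : R)) '' A)) := by
  rw [mem_nonZeroDivisors_iff_right]
  intro z hz
  obtain ⟨f, rfl⟩ := Ideal.Quotient.mk_surjective z
  rw [← map_mul, Ideal.Quotient.eq_zero_iff_mem] at hz
  have hz' : f * (monomial d 1 - monomial c 1) ∈ Ideal.span ((monomial · (1 : R)) '' A) := by
    rwa [← neg_sub, mul_neg, neg_mem_iff]
  rw [Ideal.Quotient.eq_zero_iff_mem, mem_span_iff_forall_mem_upperClosure]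
  intro u hu
  obtain ⟨i, hi⟩ := exists_add_nsmul_mem_upperClosure_of_mul_sub_mem hcd hz hu
  obtain ⟨j, hj⟩ := exists_add_nsmul_mem_upperClosure_of_mul_sub_mem hcd.symm hz' hu
  exact hA u i j hi hj

theorem le_of_le_add_single {e : σ →₀ ℕ} {a : σ} {k : ℕ} (he : e ≤ u + Finsupp.single a k)
    (ha : e a ≤ u a) : e ≤ u := by
  intro x
  obtain rfl | hx := eq_or_ne x a
  · exact ha
  · simpa [Finsupp.single_eq_of_ne hx] using he x

theorem mem_upperClosure_of_add_single_mem {a b : σ} (hab : a ≠ b)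
    (hA : MonovaryOn (· b) (· a) A) {k l : ℕ}
    (ha : u + Finsupp.single a k ∈ upperClosure A) (hb : u + Finsupp.single b l ∈ upperClosure A) :
    u ∈ upperClosure A := by
  obtain ⟨e, he, hea⟩ := mem_upperClosure.1 ha
  obtain ⟨e', he', heb⟩ := mem_upperClosure.1 hb
  have hb_le : e b ≤ u b := by simpa [Finsupp.single_eq_of_ne hab.symm] using hea b
  have ha_le : e' a ≤ u a := by simpa [Finsupp.single_eq_of_ne hab] using heb a
  obtain h | h := le_or_gt (e a) (u a)
  · exact mem_upperClosure.2 ⟨e, he, le_of_le_add_single hea h⟩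
  · have hb' : e' b ≤ e b := hA he' he (ha_le.trans_lt h)
    exact mem_upperClosure.2 ⟨e', he', le_of_le_add_single heb (hb'.trans hb_le)⟩

theorem mk_X_pow_sub_X_pow_mem_nonZeroDivisors {a b : σ} (hab : a ≠ b)
    (hA : MonovaryOn (· b) (· a) A) {l : ℕ} (hl : l ≠ 0) (m : ℕ) :
    Ideal.Quotient.mk (Ideal.span ((monomial · (1 : R)) '' A)) (X a ^ l - X b ^ m) ∈
      nonZeroDivisors (MvPolynomial σ R ⧸ Ideal.span ((monomial · (1 : R)) '' A)) := by
  have hne : Finsupp.single a l ≠ Finsupp.single b m := fun h =>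
    hl (by simpa [Finsupp.single_eq_of_ne hab] using DFunLike.congr_fun h a)
  rw [X_pow_eq_monomial, X_pow_eq_monomial]
  refine mk_monomial_sub_monomial_mem_nonZeroDivisors hne fun u i j hi hj => ?_
  rw [Finsupp.smul_single] at hi hj
  exact mem_upperClosure_of_add_single_mem hab hA hi hj

end MonomialIdeal

section Polarization

variable {σ τ ι κ : Type*} {f : σ → τ} {x₀ : τ} {x₁ : σ} {u : ι → σ →₀ ℕ} {r : κ → ℕ}
  {v : κ → σ →₀ ℕ}

/-- Exponents of the generators `x^(u i)` and `x₀ x₁^(r t) x^(v t)` of a weighted partial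
polarization. The variables of the original ring are renamed along `f`, and `x₀` is the new
variable; in the paper's notation, `r t = q_t - q_1 + p`. -/
def polarizedExponents (f : σ → τ) (x₀ : τ) (x₁ : σ) (u : ι → σ →₀ ℕ) (r : κ → ℕ)
    (v : κ → σ →₀ ℕ) : Set (τ →₀ ℕ) :=
  (Set.range fun i => Finsupp.mapDomain f (u i)) ∪
    Set.range fun t =>
      Finsupp.single x₀ 1 + Finsupp.single (f x₁) (r t) + Finsupp.mapDomain f (v t)

theorem monovaryOn_polarizedExponents (hf : f.Injective) (hx₀ : x₀ ∉ Set.range f)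
    (hur : ∀ i t, u i x₁ ≤ r t + v t x₁) :
    MonovaryOn (· (f x₁)) (· x₀) (polarizedExponents f x₀ x₁ u r v) := by
  have hne : x₀ ≠ f x₁ := fun h => hx₀ ⟨x₁, h.symm⟩
  have hold (w : σ →₀ ℕ) : Finsupp.mapDomain f w x₀ = 0 :=
    Finsupp.mapDomain_of_notMem_range w x₀ hx₀
  rintro _ (⟨i, rfl⟩ | ⟨t, rfl⟩) _ (⟨i', rfl⟩ | ⟨t', rfl⟩) hlt
  case inl.inr =>
    simpa [Finsupp.mapDomain_apply hf, Finsupp.single_eq_of_ne hne.symm] using hur i t'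
  all_goals simp [hold, Finsupp.single_eq_of_ne hne] at hlt

theorem polarization_nonzerodivisors_general {R : Type*} [CommRing R] (hf : f.Injective)
    (hx₀ : x₀ ∉ Set.range f) (hur : ∀ i t, u i x₁ ≤ r t + v t x₁) {J : Ideal (MvPolynomial τ R)}
    (hJ : J = Ideal.span
      ((Set.range fun i => monomial (Finsupp.mapDomain f (u i)) (1 : R)) ∪
       (Set.range fun t => monomial (Finsupp.single x₀ 1 + Finsupp.single (f x₁) (r t) +
          Finsupp.mapDomain f (v t)) (1 : R))))
    {l : ℕ} (hl : l ≠ 0) (m : ℕ) :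
    Ideal.Quotient.mk J (X x₀ ^ l - X (f x₁) ^ m) ∈ nonZeroDivisors (MvPolynomial τ R ⧸ J) := by
  have hspan : J = Ideal.span ((monomial · (1 : R)) '' polarizedExponents f x₀ x₁ u r v) := by
    rw [hJ, polarizedExponents, Set.image_union, ← Set.range_comp, ← Set.range_comp]
    rfl
  subst hspan
  exact MonomialIdeal.mk_X_pow_sub_X_pow_mem_nonZeroDivisors (fun h => hx₀ ⟨x₁, h.symm⟩)
    (monovaryOn_polarizedExponents hf hx₀ hur) hl m

end Polarization

/-- **Signature invariants of monomial ideals** (Lemma: regular elements on the weighted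
partial polarization).  In the gap setup, where the minimal generating set of the
monomial ideal `I ⊆ R = K[x_1,…,x_n]` (of height at least `2`) is
`G(I) = ⋃_{j=0}^{p} {x_1^j x^{γ_{i,j}}} ∪ {x_1^{q_i} x^{ε_i}}` with `q_1 - p ≥ 2`, the
pure binomials `x_0 - x_1^{q_1-p}` and `x_0 - x_1` are nonzerodivisors on
`R[x_0]/I_pol`, where `I_pol ⊆ R[x_0]` is the weighted partial polarization of `I`.
Here `R[x_0] = K[x_0,x_1,…,x_n]` is modelled as `MvPolynomial (Fin (n+1)) K`, the new
variable `x_0` being `X 0` and `x_i` being `X (Fin.succ (i-1))`. -/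
theorem polarization_nonzerodivisors
    (K : Type) [Field K] (n : ℕ) (hn : 0 < n)
    (p s : ℕ) (hs : 0 < s)
    (qe : Fin s → ℕ) (hmono : Monotone qe) (hq : p + 2 ≤ qe ⟨0, hs⟩)
    (k : Fin (p + 1) → ℕ) (hk : ∀ j, 0 < k j)
    (γ : (j : Fin (p + 1)) → Fin (k j) → (Fin n →₀ ℕ)) (hγ : ∀ j i, γ j i ⟨0, hn⟩ = 0)
    (ε : Fin s → (Fin n →₀ ℕ)) (hε : ∀ i, ε i ⟨0, hn⟩ = 0)
    (w : ((Σ j : Fin (p + 1), Fin (k j)) ⊕ Fin s) → (Fin n →₀ ℕ))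
    (hw : w = Sum.elim
      (fun ji : Σ j : Fin (p + 1), Fin (k j) =>
        Finsupp.single ⟨0, hn⟩ (ji.1 : ℕ) + γ ji.1 ji.2)
      (fun i : Fin s => Finsupp.single ⟨0, hn⟩ (qe i) + ε i))
    (hch : ∀ a b, w a ≤ w b → a = b)
    (I : Ideal (MvPolynomial (Fin n) K))
    (hI : I = Ideal.span (Set.range fun t => monomial (w t) (1 : K)))
    (hht : (2 : ℕ∞) ≤ heightOf I)
    (Ipol : Ideal (MvPolynomial (Fin (n + 1)) K))
    (hIpol : Ipol = Ideal.span
      ((Set.range fun ji : Σ j : Fin (p + 1), Fin (k j) =>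
          monomial (Finsupp.mapDomain Fin.succ (w (Sum.inl ji))) (1 : K)) ∪
       (Set.range fun i : Fin s =>
          monomial (Finsupp.single (0 : Fin (n + 1)) 1 +
            Finsupp.single (Fin.succ ⟨0, hn⟩) (qe i - qe ⟨0, hs⟩ + p) +
            Finsupp.mapDomain Fin.succ (ε i)) (1 : K))))
    :
    Ideal.Quotient.mk Ipol
        (X (0 : Fin (n + 1)) - X (Fin.succ ⟨0, hn⟩) ^ (qe ⟨0, hs⟩ - p)) ∈
      nonZeroDivisors (MvPolynomial (Fin (n + 1)) K ⧸ Ipol) ∧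
    Ideal.Quotient.mk Ipol (X (0 : Fin (n + 1)) - X (Fin.succ ⟨0, hn⟩)) ∈
      nonZeroDivisors (MvPolynomial (Fin (n + 1)) K ⧸ Ipol) := by
  have hdeg (ji : Σ j : Fin (p + 1), Fin (k j)) : w (Sum.inl ji) ⟨0, hn⟩ ≤ p := by
    simpa [hw, hγ] using ji.1.is_le
  have hnzd := polarization_nonzerodivisors_general (Fin.succ_injective n) (x₀ := 0)
    (fun ⟨i, hi⟩ => Fin.succ_ne_zero i hi) (fun ji t => (hdeg ji).trans (by omega)) hIpol
    one_ne_zero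
  simp only [pow_one] at hnzd
  exact ⟨hnzd _, by simpa only [pow_one] using hnzd 1⟩
end

section
/- In the gap setup, the natural map R → R[x_0]/(I_pol, x_0 − x_1^{q_1 − p}) induces a ring isomorphism R/I ≅ R[x_0]/(I_pol, x_0 − x_1^{q_1 − p}); moreover, giving x_0 degree q_1 − p, this is an isomorphism of graded R-modules. -/
/-!
Substituting `x_1 ^ m` for `x_0`, where `m = q_1 - p`, is a retraction `R[x_0] → R` of the
inclusion whose kernel is generated by `x_0 - x_1 ^ m`, and it carries the generators of `I_pol`
to those of `I`. Hence `I_pol + (x_0 - x_1 ^ m)` is the preimage of `I`. The retraction and the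
inclusion both preserve degrees once `x_0` has weight `m`, so the induced isomorphism of
quotients is graded.
-/

open MvPolynomial

section WeightedDegree

variable {R M σ τ : Type*} [CommSemiring R] [AddCommMonoid M] {w : σ → M} {w' : τ → M} {d : M}

theorem isWeightedHomogeneous_aeval {f : σ → MvPolynomial τ R}
    (hf : ∀ i, IsWeightedHomogeneous w' (f i) (w i)) {g : MvPolynomial σ R}
    (hg : IsWeightedHomogeneous w g d) : IsWeightedHomogeneous w' (aeval f g) d := by
  rw [aeval_def, eval₂_eq]
  refine IsWeightedHomogeneous.sum _ _ _ fun u hu => ?_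
  rw [← hg (mem_support_iff.mp hu), Finsupp.weight_apply]
  exact (IsWeightedHomogeneous.prod _ _ _ fun i _ => (hf i).pow (u i)).C_mul _

theorem isWeightedHomogeneous_rename {f : σ → τ} {g : MvPolynomial σ R}
    (hg : IsWeightedHomogeneous (w' ∘ f) g d) : IsWeightedHomogeneous w' (rename f g) d := by
  rw [← aeval_X_left_apply (rename f g), aeval_rename]
  exact isWeightedHomogeneous_aeval (fun i => isWeightedHomogeneous_X R w' (f i)) hg

end WeightedDegree

section SubstZero

variable {R : Type*} [CommSemiring R] {n : ℕ}

/-- The substitution `x_0 ↦ q`, as a retraction of `R[x_1, …, x_n] ⊆ R[x_0, …, x_n]`; the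
inclusion is `rename Fin.succ`. -/
noncomputable def substZero (q : MvPolynomial (Fin n) R) :
    MvPolynomial (Fin (n + 1)) R →ₐ[R] MvPolynomial (Fin n) R :=
  aeval (Fin.cons q X)

@[simp]
theorem substZero_X_zero (q : MvPolynomial (Fin n) R) : substZero q (X 0) = q := by
  simp [substZero]

@[simp]
theorem substZero_rename_succ (q f : MvPolynomial (Fin n) R) :
    substZero q (rename Fin.succ f) = f := by
  rw [substZero, aeval_rename, show Fin.cons q X ∘ Fin.succ = X from Fin.cons_comp_succ _ _,
    aeval_X_left_apply]

theorem substZero_surjective (q : MvPolynomial (Fin n) R) :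
    Function.Surjective (substZero q) :=
  Function.RightInverse.surjective (substZero_rename_succ q)

theorem isWeightedHomogeneous_substZero {M : Type*} [AddCommMonoid M] {w : Fin n → M} {μ : M}
    {q : MvPolynomial (Fin n) R} (hq : IsWeightedHomogeneous w q μ)
    {g : MvPolynomial (Fin (n + 1)) R} {d : M}
    (hg : IsWeightedHomogeneous (Fin.cons μ w : Fin (n + 1) → M) g d) :
    IsWeightedHomogeneous w (substZero q g) d := by
  refine isWeightedHomogeneous_aeval (fun i => ?_) hg
  cases i using Fin.cases with
  | zero => simpa using hq
  | succ j => simpa using isWeightedHomogeneous_X R w j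

end SubstZero

section Polarization

variable (R : Type*) [CommSemiring R] {n : ℕ} {ι κ : Type*}

/-- The weighted partial polarization of a monomial ideal: the exponents `u i` are those of the
generators left alone, and `x_z ^ (c j) x ^ (v j)` is the cofactor of `x_0` in each of the others.
The original ideal has `x_z ^ (m + c j) x ^ (v j)` in place of the latter, where `m` is the weight
of `x_0`. -/
noncomputable def weightedPartialPolarization (z : Fin n) (u : ι → Fin n →₀ ℕ) (c : κ → ℕ)
    (v : κ → Fin n →₀ ℕ) : Ideal (MvPolynomial (Fin (n + 1)) R) :=
  Ideal.span
    ((Set.range fun i => monomial (Finsupp.mapDomain Fin.succ (u i)) (1 : R)) ∪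
     (Set.range fun j => monomial (Finsupp.single 0 1 + Finsupp.single (Fin.succ z) (c j) +
        Finsupp.mapDomain Fin.succ (v j)) (1 : R)))

theorem substZero_polarized_monomial (z : Fin n) (m c : ℕ) (v : Fin n →₀ ℕ) :
    substZero (X z ^ m) (monomial (Finsupp.single 0 1 + Finsupp.single (Fin.succ z) c +
        Finsupp.mapDomain Fin.succ v) (1 : R)) =
      monomial (Finsupp.single z (m + c) + v) 1 := by
  have factor : monomial (Finsupp.single 0 1 + Finsupp.single (Fin.succ z) c +
      Finsupp.mapDomain Fin.succ v) (1 : R) =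
      X 0 * rename Fin.succ (monomial (Finsupp.single z c + v) 1) := by
    rw [rename_monomial, X, monomial_mul, one_mul, Finsupp.mapDomain_add,
      Finsupp.mapDomain_single, add_assoc]
  rw [factor, map_mul, substZero_X_zero, substZero_rename_succ, X_pow_eq_monomial, monomial_mul,
    one_mul, ← add_assoc, ← Finsupp.single_add]

theorem map_substZero_weightedPartialPolarization (z : Fin n) (m : ℕ) (u : ι → Fin n →₀ ℕ)
    (c : κ → ℕ) (v : κ → Fin n →₀ ℕ) :
    (weightedPartialPolarization R z u c v).map (substZero (X z ^ m)) =
      Ideal.span (Set.range fun t =>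
        monomial (Sum.elim u (fun j => Finsupp.single z (m + c j) + v j) t) (1 : R)) := by
  have substZero_inl (i : ι) : substZero (X z ^ m)
      (monomial (Finsupp.mapDomain Fin.succ (u i)) (1 : R)) = monomial (u i) 1 := by
    rw [← rename_monomial, substZero_rename_succ]
  rw [weightedPartialPolarization, Ideal.map_span, Set.image_union, ← Set.range_comp,
    ← Set.range_comp, ← Set.Sum.elim_range]
  congr 2
  ext1 (i | j)
  · exact substZero_inl i
  · exact substZero_polarized_monomial R z m (c j) (v j)

end Polarization

/-- The isomorphism `S ⧸ (P + ker f) ≃ A ⧸ f(P)` induced by a surjection `f : S → A`. -/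
noncomputable def quotientSupKerEquiv {S A F : Type*} [CommRing S] [CommRing A]
    [FunLike F S A] [RingHomClass F S A] {f : F} (hf : Function.Surjective f) (P : Ideal S) :
    (S ⧸ (P ⊔ RingHom.ker f)) ≃+* (A ⧸ P.map f) :=
  (Ideal.quotEquivOfEq (Ideal.comap_map_of_surjective' f hf P).symm).trans <|
    .ofBijective (Ideal.quotientMap (P.map f) (f : S →+* A) le_rfl)
      ⟨Ideal.quotientMap_injective, Ideal.quotientMap_surjective hf⟩

section QuotientSubstZero

variable {R : Type*} [CommRing R] {n : ℕ}

theorem mk_rename_succ_substZero {q : MvPolynomial (Fin n) R}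
    {J : Ideal (MvPolynomial (Fin (n + 1)) R)} (hJ : X 0 - rename Fin.succ q ∈ J)
    (g : MvPolynomial (Fin (n + 1)) R) :
    Ideal.Quotient.mk J (rename Fin.succ (substZero q g)) = Ideal.Quotient.mk J g := by
  suffices h : ((Ideal.Quotient.mkₐ R J).comp (rename Fin.succ)).comp (substZero q) =
      Ideal.Quotient.mkₐ R J from DFunLike.congr_fun h g
  ext i
  cases i using Fin.cases with
  | zero => simpa using (Ideal.Quotient.eq.mpr hJ).symm
  | succ j => simp [substZero]

theorem ker_substZero (q : MvPolynomial (Fin n) R) :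
    RingHom.ker (substZero q) = Ideal.span {X 0 - rename Fin.succ q} := by
  refine le_antisymm (fun g hg => ?_) ?_
  · rw [← Ideal.Quotient.eq_zero_iff_mem,
      ← mk_rename_succ_substZero (Ideal.mem_span_singleton_self _) g,
      show substZero q g = 0 from hg, map_zero, map_zero]
  · simp [RingHom.mem_ker]

/-- The isomorphism eliminating `x_0` from `R[x_0, …, x_n] ⧸ (P, x_0 - q)`, directed so that it is
induced by the inclusion of `R[x_1, …, x_n]`. -/
noncomputable def quotientSubstZeroEquiv (q : MvPolynomial (Fin n) R)
    (P : Ideal (MvPolynomial (Fin (n + 1)) R)) :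
    (MvPolynomial (Fin n) R ⧸ P.map (substZero q)) ≃+*
      (MvPolynomial (Fin (n + 1)) R ⧸ (P ⊔ Ideal.span {X 0 - rename Fin.succ q})) :=
  ((Ideal.quotEquivOfEq (by rw [ker_substZero])).trans
    (quotientSupKerEquiv (substZero_surjective q) P)).symm

theorem quotientSubstZeroEquiv_mk_substZero (q : MvPolynomial (Fin n) R)
    (P : Ideal (MvPolynomial (Fin (n + 1)) R)) (g : MvPolynomial (Fin (n + 1)) R) :
    quotientSubstZeroEquiv q P (Ideal.Quotient.mk _ (substZero q g)) = Ideal.Quotient.mk _ g :=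
  (RingEquiv.symm_apply_eq _).mpr rfl

theorem quotientSubstZeroEquiv_mk (q : MvPolynomial (Fin n) R)
    (P : Ideal (MvPolynomial (Fin (n + 1)) R)) (r : MvPolynomial (Fin n) R) :
    quotientSubstZeroEquiv q P (Ideal.Quotient.mk _ r) =
      Ideal.Quotient.mk _ (rename Fin.succ r) := by
  simpa using quotientSubstZeroEquiv_mk_substZero q P (rename Fin.succ r)

theorem quotientSubstZeroEquiv_image_isWeightedHomogeneous {M : Type*} [AddCommMonoid M]
    {w : Fin n → M} {μ : M} {q : MvPolynomial (Fin n) R} (hq : IsWeightedHomogeneous w q μ)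
    (P : Ideal (MvPolynomial (Fin (n + 1)) R)) (d : M) :
    quotientSubstZeroEquiv q P '' (Ideal.Quotient.mk _ '' {f | IsWeightedHomogeneous w f d}) =
      Ideal.Quotient.mk _ ''
        {g | IsWeightedHomogeneous (Fin.cons μ w : Fin (n + 1) → M) g d} := by
  apply Set.Subset.antisymm
  · rintro _ ⟨_, ⟨f, hf, rfl⟩, rfl⟩
    exact ⟨rename Fin.succ f, isWeightedHomogeneous_rename hf,
      (quotientSubstZeroEquiv_mk q P f).symm⟩
  · rintro _ ⟨g, hg, rfl⟩
    exact ⟨_, ⟨substZero q g, isWeightedHomogeneous_substZero hq hg, rfl⟩,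
      quotientSubstZeroEquiv_mk_substZero q P g⟩

end QuotientSubstZero

theorem quotient_polarization_iso_general (R : Type*) [CommRing R] {n : ℕ} {ι κ M : Type*}
    [AddCommMonoid M] (ω : Fin n → M) (z : Fin n) (m : ℕ)
    (u : ι → Fin n →₀ ℕ) (c : κ → ℕ) (v : κ → Fin n →₀ ℕ)
    {I : Ideal (MvPolynomial (Fin n) R)}
    (hI : I = Ideal.span (Set.range fun t =>
      monomial (Sum.elim u (fun j => Finsupp.single z (m + c j) + v j) t) (1 : R)))
    {J : Ideal (MvPolynomial (Fin (n + 1)) R)}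
    (hJ : J = weightedPartialPolarization R z u c v ⊔ Ideal.span {X 0 - X (Fin.succ z) ^ m}) :
    ∃ e : (MvPolynomial (Fin n) R ⧸ I) ≃+* (MvPolynomial (Fin (n + 1)) R ⧸ J),
      (∀ r, e (Ideal.Quotient.mk I r) = Ideal.Quotient.mk J (rename Fin.succ r)) ∧
      (∀ d, e '' (Ideal.Quotient.mk I '' {f | IsWeightedHomogeneous ω f d}) =
        Ideal.Quotient.mk J ''
          {g | IsWeightedHomogeneous (Fin.cons (m • ω z) ω : Fin (n + 1) → M) g d}) := by
  have rename_pow : X (Fin.succ z) ^ m = rename Fin.succ (X z ^ m : MvPolynomial (Fin n) R) := by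
    rw [map_pow, rename_X]
  rw [← map_substZero_weightedPartialPolarization] at hI
  rw [rename_pow] at hJ
  subst hI hJ
  exact ⟨quotientSubstZeroEquiv _ _, quotientSubstZeroEquiv_mk _ _,
    quotientSubstZeroEquiv_image_isWeightedHomogeneous
      ((isWeightedHomogeneous_X R ω z).pow m) _⟩

/-- **Signature invariants of monomial ideals** (Lemma: the quotient by the weighted
partial polarization).  In the gap setup, the natural map
`R → R[x_0]/(I_pol, x_0 - x_1^{q_1-p})` (inclusion of variables followed by the quotient
map) induces a ring isomorphism `R/I ≅ R[x_0]/(I_pol, x_0 - x_1^{q_1-p})`; moreover,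
giving `x_0` the weight `q_1 - p` (and each `x_i` weight `1`), the isomorphism is graded:
it carries the degree-`d` part of `R/I` onto the degree-`d` part of the target for
every `d`.  Here `R[x_0] = K[x_0,x_1,…,x_n]` is modelled as `MvPolynomial (Fin (n+1)) K`,
with `x_0 = X 0` and `x_i = X (Fin.succ (i-1))`. -/
theorem quotient_polarization_iso
    (K : Type) [Field K] (n : ℕ) (hn : 0 < n)
    (p s : ℕ) (hs : 0 < s)
    (qe : Fin s → ℕ) (hmono : Monotone qe) (hq : p + 2 ≤ qe ⟨0, hs⟩)
    (k : Fin (p + 1) → ℕ) (hk : ∀ j, 0 < k j)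
    (γ : (j : Fin (p + 1)) → Fin (k j) → (Fin n →₀ ℕ)) (hγ : ∀ j i, γ j i ⟨0, hn⟩ = 0)
    (ε : Fin s → (Fin n →₀ ℕ)) (hε : ∀ i, ε i ⟨0, hn⟩ = 0)
    (w : ((Σ j : Fin (p + 1), Fin (k j)) ⊕ Fin s) → (Fin n →₀ ℕ))
    (hw : w = Sum.elim
      (fun ji : Σ j : Fin (p + 1), Fin (k j) =>
        Finsupp.single ⟨0, hn⟩ (ji.1 : ℕ) + γ ji.1 ji.2)
      (fun i : Fin s => Finsupp.single ⟨0, hn⟩ (qe i) + ε i))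
    (hch : ∀ a b, w a ≤ w b → a = b)
    (I : Ideal (MvPolynomial (Fin n) K))
    (hI : I = Ideal.span (Set.range fun t => monomial (w t) (1 : K)))
    (hht : (2 : ℕ∞) ≤ heightOf I)
    (Ipol : Ideal (MvPolynomial (Fin (n + 1)) K))
    (hIpol : Ipol = Ideal.span
      ((Set.range fun ji : Σ j : Fin (p + 1), Fin (k j) =>
          monomial (Finsupp.mapDomain Fin.succ (w (Sum.inl ji))) (1 : K)) ∪
       (Set.range fun i : Fin s =>
          monomial (Finsupp.single (0 : Fin (n + 1)) 1 +
            Finsupp.single (Fin.succ ⟨0, hn⟩) (qe i - qe ⟨0, hs⟩ + p) +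
            Finsupp.mapDomain Fin.succ (ε i)) (1 : K))))
    (J : Ideal (MvPolynomial (Fin (n + 1)) K))
    (hJ : J = Ipol ⊔ Ideal.span
      {X (0 : Fin (n + 1)) - X (Fin.succ ⟨0, hn⟩) ^ (qe ⟨0, hs⟩ - p)}) :
    ∃ e : (MvPolynomial (Fin n) K ⧸ I) ≃+* (MvPolynomial (Fin (n + 1)) K ⧸ J),
      (∀ r : MvPolynomial (Fin n) K,
        e (Ideal.Quotient.mk I r) = Ideal.Quotient.mk J (rename Fin.succ r)) ∧
      (∀ d : ℕ,
        e '' (Ideal.Quotient.mk I '' { f : MvPolynomial (Fin n) K | f.IsHomogeneous d }) =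
          Ideal.Quotient.mk J '' { g : MvPolynomial (Fin (n + 1)) K |
            IsWeightedHomogeneous
              (Fin.cases (qe ⟨0, hs⟩ - p) (fun _ => 1) : Fin (n + 1) → ℕ) g d }) := by
  have exponent_eq (i : Fin s) : qe ⟨0, hs⟩ - p + (qe i - qe ⟨0, hs⟩ + p) = qe i := by
    have : qe ⟨0, hs⟩ ≤ qe i := hmono (Fin.mk_le_of_le_val (Nat.zero_le _))
    omega
  subst hIpol
  obtain ⟨e, he, he_graded⟩ :=
    quotient_polarization_iso_general K (1 : Fin n → ℕ) ⟨0, hn⟩ (qe ⟨0, hs⟩ - p)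
      (fun ji => w (Sum.inl ji)) (fun i => qe i - qe ⟨0, hs⟩ + p) ε
      (by simpa only [exponent_eq, hw, Sum.elim_inl] using hI) hJ
  rw [Pi.one_apply, smul_eq_mul, mul_one] at he_graded
  exact ⟨e, he, he_graded⟩
end

section
/- In the gap setup, depth(R/I) = depth(R/I_sft) and dim(R/I) = dim(R/I_sft), where dim denotes Krull dimension. -/
open MvPolynomial

/-!
The shift only changes an exponent: with `x = x_1` and suitable monomial ideals `A₀ ≤ A₁`, both
`I` and `I_sft` have the form `A₀ + x ^ m A₁`, with `m = q_1 - p` and `m = 1` respectively.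

For the depth, replace `x ^ m` by an indeterminate: with `P = A₀[t] + t A₁[t]` one has
`R / (A₀ + x ^ m A₁) = R[t] / (P + (t - x ^ m))`. The gap makes `x` a nonzerodivisor on `A₁ / A₀`,
hence `t - x ^ m` a nonzerodivisor on `R[t] / P`, and by Rees' theorem dividing out a nonzerodivisor
lowers the depth by exactly one, whatever `m` is. The preimage of `(x_1, …, x_n)` in `R[t]` does not
depend on `m` either. For the dimension, `A₀ + x ^ m A₁` has the same radical for all `m > 0`.
-/

section RegularSequences

open CategoryTheory Abelian RingTheory.Sequence
open scoped Pointwise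

universe u v

/-- The `R`-module `M` has a regular sequence of length `k` with entries in the ideal `J`; the
largest such `k` is the `J`-depth of `M`. -/
def HasRegularSeq {R : Type*} [CommRing R] (J : Ideal R) (M : Type*) [AddCommGroup M] [Module R M]
    (k : ℕ) : Prop :=
  ∃ rs : List R, rs.length = k ∧ (∀ r ∈ rs, r ∈ J) ∧ IsRegular M rs

theorem subsingleton_ext_quotSMulTop {R : Type u} [CommRing R] [Small.{v} R]
    (N M : ModuleCat.{v} R) {f : R} (hf : IsSMulRegular M f) {i : ℕ}
    (hi : Subsingleton (Ext N M i)) (hi' : Subsingleton (Ext N M (i + 1))) :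
    Subsingleton (Ext N (ModuleCat.of R (QuotSMulTop f M)) i) :=
  AddCommGrpCat.subsingleton_of_isZero <| ShortComplex.Exact.isZero_of_both_zeros
    (Ext.covariant_sequence_exact₃' N hf.smulShortComplex_shortExact i (i + 1) rfl)
    ((AddCommGrpCat.isZero_of_iff_subsingleton.mpr hi).eq_zero_of_src _)
    ((AddCommGrpCat.isZero_of_iff_subsingleton.mpr hi').eq_zero_of_tgt _)

theorem smul_top_quotient_ne_top_s16 {R M : Type*} [CommRing R] [AddCommGroup M] [Module R M]
    {J : Ideal R} {N : Submodule R M} (hN : N ≤ J • ⊤) (hJ : J • (⊤ : Submodule R M) ≠ ⊤) :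
    J • (⊤ : Submodule R (M ⧸ N)) ≠ ⊤ := by
  intro h
  have hcomap := congrArg (Submodule.comap N.mkQ) h
  rw [Submodule.comap_smul_top_of_surjective J _ N.mkQ_surjective, Submodule.ker_mkQ,
    sup_eq_left.mpr hN, Submodule.comap_top] at hcomap
  exact hJ hcomap

theorem hasRegularSeq_quotSMulTop_iff {R : Type u} [CommRing R] [Small.{v} R] [IsNoetherianRing R]
    {M : Type v} [AddCommGroup M] [Module R M] [Module.Finite R M] {J : Ideal R}
    (hJM : J • (⊤ : Submodule R M) ≠ ⊤) {f : R} (hfJ : f ∈ J) (hf : IsSMulRegular M f) {k : ℕ} :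
    HasRegularSeq J (QuotSMulTop f M) k ↔ HasRegularSeq J M (k + 1) := by
  constructor
  · rintro ⟨rs, hlen, hrs, hreg⟩
    exact ⟨f :: rs, by rw [List.length_cons, hlen], List.forall_mem_cons.mpr ⟨hfJ, hrs⟩,
      (isRegular_cons_iff M f rs).mpr ⟨hf, hreg⟩⟩
  · intro h
    have hle : f • (⊤ : Submodule R M) ≤ J • ⊤ := by
      rw [← Submodule.ideal_span_singleton_smul]
      exact Submodule.smul_mono_left ((Ideal.span_singleton_le_iff_mem J).mpr hfJ)
    -- Rees: `J` contains a regular sequence of length `k` on `M` iff `Ext ^ i (R / J, M) = 0` for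
    -- all `i < k`.
    have hext := ((ModuleCat.exists_isRegular_tfae J (k + 1) (ModuleCat.of R M)
      hJM.lt_top).out 3 1).mp h
    exact ((ModuleCat.exists_isRegular_tfae J k (ModuleCat.of R (QuotSMulTop f M))
      (smul_top_quotient_ne_top_s16 hle hJM).lt_top).out 1 3).mp fun i hi =>
        subsingleton_ext_quotSMulTop _ (ModuleCat.of R M) hf (hext i (by lia))
          (hext (i + 1) (by lia))

theorem hasRegularSeq_comap_iff {R S M N : Type*} [CommRing R] [CommRing S] [AddCommGroup M]
    [Module R M] [AddCommGroup N] [Module S N] {φ : R →+* S} (hφ : Function.Surjective φ)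
    (e : M ≃+ N) (he : ∀ (r : R) (x : M), e (r • x) = φ r • e x) (J : Ideal S) {k : ℕ} :
    HasRegularSeq (J.comap φ) M k ↔ HasRegularSeq J N k := by
  have hmap (rs : List R) : IsRegular M rs ↔ IsRegular N (rs.map φ) :=
    e.isRegular_congr (List.forall₂_map_right_iff.mpr (List.forall₂_same.mpr fun r _ => he r))
  constructor
  · rintro ⟨rs, hlen, hrs, hreg⟩
    exact ⟨rs.map φ, by rw [List.length_map, hlen], List.forall_mem_map.mpr hrs, (hmap rs).mp hreg⟩
  · rintro ⟨ss, hlen, hss, hreg⟩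
    obtain ⟨rs, rfl⟩ := List.map_surjective_iff.mpr hφ ss
    exact ⟨rs, by rw [← hlen, List.length_map], fun r hr => hss _ (List.mem_map_of_mem hr),
      (hmap rs).mpr hreg⟩

end RegularSequences

section Quotients

open scoped Pointwise

variable {R S : Type*} [CommRing R] [CommRing S]

/-- The isomorphism `(R / I) / f (R / I) ≃ R / (I + (f))`. -/
def quotSMulTopQuotientEquiv (I : Ideal R) (f : R) :
    QuotSMulTop f (R ⧸ I) ≃ₗ[R] R ⧸ (I ⊔ Ideal.span {f}) :=
  Submodule.quotEquivOfEq _ _ (by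
    rw [← Submodule.range_mkQ, ← Submodule.map_top, ← Submodule.ideal_span_singleton_smul,
      ← Submodule.map_smul'', smul_eq_mul, Ideal.mul_top]) ≪≫ₗ
    Submodule.quotientQuotientEquivQuotientSup I (Ideal.span {f})

theorem hasRegularSeq_quotSMulTop_quotient_iff {φ : R →+* S} (hφ : Function.Surjective φ) {f : R}
    (hker : RingHom.ker φ = Ideal.span {f}) (I : Ideal R) (J : Ideal S) {k : ℕ} :
    HasRegularSeq (J.comap φ) (QuotSMulTop f (R ⧸ I)) k ↔ HasRegularSeq J (S ⧸ I.map φ) k := by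
  have hcomap : (I.map φ).comap φ = I ⊔ Ideal.span {f} := by
    rw [Ideal.comap_map_of_surjective' φ hφ, hker]
  let e : R ⧸ (I ⊔ Ideal.span {f}) ≃+* S ⧸ I.map φ :=
    RingEquiv.ofBijective (Ideal.quotientMap _ φ hcomap.ge)
      ⟨Ideal.quotientMap_injective' hcomap.le, Ideal.quotientMap_surjective hφ⟩
  have he (r : R) (x : R ⧸ (I ⊔ Ideal.span {f})) : e (r • x) = φ r • e x := by
    rw [Algebra.smul_def, map_mul, Algebra.smul_def]
    rfl
  refine hasRegularSeq_comap_iff hφ ((quotSMulTopQuotientEquiv I f).toAddEquiv.trans e.toAddEquiv)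
    (fun r x => ?_) J
  exact (congrArg e (map_smul (quotSMulTopQuotientEquiv I f) r x)).trans (he r _)

theorem ringKrullDim_quotient_eq_of_radical_eq {I J : Ideal R} (h : I.radical = J.radical) :
    ringKrullDim (R ⧸ I) = ringKrullDim (R ⧸ J) := by
  rw [ringKrullDim_quotient, ringKrullDim_quotient, PrimeSpectrum.zeroLocus_eq_iff.mpr h]

theorem radical_sup_span_pow_mul (A₀ A₁ : Ideal R) (x : R) {m : ℕ} (hm : m ≠ 0) :
    (A₀ ⊔ Ideal.span {x ^ m} * A₁).radical = (A₀ ⊔ Ideal.span {x} * A₁).radical := by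
  rw [← Ideal.span_singleton_pow, Ideal.radical_sup, Ideal.radical_mul, Ideal.radical_pow _ hm,
    ← Ideal.radical_mul, ← Ideal.radical_sup]

end Quotients

section Polarization

open scoped Polynomial

variable {R : Type*} [CommRing R] {A₀ A₁ : Ideal R}

/-- The ideal `A₀[t] + t A₁[t]` of `R[t]`, obtained from `A₀ + y A₁` by replacing the element `y`
with an indeterminate, as in the polarization of a monomial ideal. -/
noncomputable def polarizedIdeal (A₀ A₁ : Ideal R) : Ideal R[X] :=
  A₀.map Polynomial.C ⊔ Ideal.span {Polynomial.X} * A₁.map Polynomial.C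

theorem map_evalRingHom_polarizedIdeal (A₀ A₁ : Ideal R) (y : R) :
    (polarizedIdeal A₀ A₁).map (Polynomial.evalRingHom y) = A₀ ⊔ Ideal.span {y} * A₁ := by
  have hC : (Polynomial.evalRingHom y).comp Polynomial.C = RingHom.id R :=
    RingHom.ext fun a => Polynomial.eval_C
  rw [polarizedIdeal, Ideal.map_sup, Ideal.map_mul, Ideal.map_map, Ideal.map_map, hC, Ideal.map_id,
    Ideal.map_id, Ideal.map_span, Set.image_singleton, Polynomial.coe_evalRingHom,
    Polynomial.eval_X]

theorem mem_polarizedIdeal_iff (h : A₀ ≤ A₁) {F : R[X]} :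
    F ∈ polarizedIdeal A₀ A₁ ↔ F ∈ A₁.map Polynomial.C ∧ F.coeff 0 ∈ A₀ := by
  constructor
  · intro hF
    have hle : polarizedIdeal A₀ A₁ ≤ A₁.map Polynomial.C :=
      sup_le (Ideal.map_mono h) Ideal.mul_le_right
    have hcoeff := Ideal.mem_map_of_mem (Polynomial.evalRingHom 0) hF
    rw [map_evalRingHom_polarizedIdeal, Ideal.span_singleton_eq_bot.mpr rfl, Ideal.bot_mul,
      sup_bot_eq, Polynomial.coe_evalRingHom, ← Polynomial.coeff_zero_eq_eval_zero] at hcoeff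
    exact ⟨hle hF, hcoeff⟩
  · rintro ⟨hF, hF₀⟩
    have hdivX : F.divX ∈ A₁.map Polynomial.C := Ideal.mem_map_C_iff.mpr fun i => by
      rw [Polynomial.coeff_divX]
      exact Ideal.mem_map_C_iff.mp hF _
    rw [← Polynomial.X_mul_divX_add F]
    exact add_mem
      (Ideal.mem_sup_right (Ideal.mul_mem_mul (Ideal.mem_span_singleton_self Polynomial.X) hdivX))
      (Ideal.mem_sup_left (Ideal.mem_map_of_mem Polynomial.C hF₀))

theorem mem_map_C_of_monic_mul_mem (A : Ideal R) {f F : R[X]} (hf : f.Monic)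
    (h : f * F ∈ A.map Polynomial.C) : F ∈ A.map Polynomial.C := by
  have hker : RingHom.ker (Polynomial.mapRingHom (Ideal.Quotient.mk A)) = A.map Polynomial.C := by
    rw [Polynomial.ker_mapRingHom, Ideal.mk_ker]
  rw [← hker, RingHom.mem_ker] at h ⊢
  rw [map_mul] at h
  exact (hf.map _).mul_right_eq_zero_iff.mp h

theorem isSMulRegular_X_sub_C_quotient_polarizedIdeal (h : A₀ ≤ A₁) {y : R}
    (hy : ∀ z ∈ A₁, y * z ∈ A₀ → z ∈ A₀) :
    IsSMulRegular (R[X] ⧸ polarizedIdeal A₀ A₁) (Polynomial.X - Polynomial.C y) := by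
  refine (isSMulRegular_on_quot_iff_lsmul_comap_le _ _).mpr fun F hF => ?_
  rw [Submodule.mem_comap, LinearMap.lsmul_apply, smul_eq_mul, mem_polarizedIdeal_iff h] at hF
  rw [mem_polarizedIdeal_iff h]
  have hF₁ : F ∈ A₁.map Polynomial.C :=
    mem_map_C_of_monic_mul_mem A₁ (Polynomial.monic_X_sub_C y) hF.1
  have hcoeff : ((Polynomial.X - Polynomial.C y) * F).coeff 0 = -(y * F.coeff 0) := by
    rw [sub_mul, Polynomial.coeff_sub, Polynomial.coeff_X_mul_zero, Polynomial.coeff_C_mul,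
      zero_sub]
  refine ⟨hF₁, hy _ (Ideal.mem_map_C_iff.mp hF₁ 0) ?_⟩
  rw [← neg_mem_iff, ← hcoeff]
  exact hF.2

theorem comap_evalRingHom_eq_comap_evalRingHom {J : Ideal R} {y z : R} (hyz : y - z ∈ J) :
    J.comap (Polynomial.evalRingHom y) = J.comap (Polynomial.evalRingHom z) := by
  ext F
  have hdiff : F.eval y - F.eval z ∈ J := J.mem_of_dvd (Polynomial.sub_dvd_eval_sub y z F) hyz
  rw [Ideal.mem_comap, Ideal.mem_comap, Polynomial.coe_evalRingHom, Polynomial.coe_evalRingHom,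
    ← sub_add_cancel (F.eval y) (F.eval z), Ideal.add_mem_iff_right J hdiff]

theorem hasRegularSeq_quotient_sup_span_mul_iff_polarizedIdeal [IsNoetherianRing R] {J : Ideal R}
    (hJ : J ≠ ⊤) (h : A₀ ≤ A₁) (hA₀ : A₀ ≤ J) {y : R} (hyJ : y ∈ J)
    (hy : ∀ z ∈ A₁, y * z ∈ A₀ → z ∈ A₀) {k : ℕ} :
    HasRegularSeq J (R ⧸ (A₀ ⊔ Ideal.span {y} * A₁)) k ↔
      HasRegularSeq (J.comap (Polynomial.evalRingHom y)) (R[X] ⧸ polarizedIdeal A₀ A₁) (k + 1) := by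
  have hsurj : Function.Surjective (Polynomial.evalRingHom y) :=
    fun a => ⟨Polynomial.C a, Polynomial.eval_C⟩
  have hle : polarizedIdeal A₀ A₁ ≤ J.comap (Polynomial.evalRingHom y) := by
    rw [← Ideal.map_le_iff_le_comap, map_evalRingHom_polarizedIdeal]
    exact sup_le hA₀ (Ideal.mul_le_left.trans ((Ideal.span_singleton_le_iff_mem J).mpr hyJ))
  have hne_top : J.comap (Polynomial.evalRingHom y) •
      (⊤ : Submodule R[X] (R[X] ⧸ polarizedIdeal A₀ A₁)) ≠ ⊤ := by
    refine smul_top_quotient_ne_top_s16 ?_ ?_ <;> rw [smul_eq_mul, Ideal.mul_top]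
    exacts [hle, Ideal.comap_ne_top _ hJ]
  have hX : Polynomial.X - Polynomial.C y ∈ J.comap (Polynomial.evalRingHom y) := by
    simp only [Ideal.mem_comap, Polynomial.coe_evalRingHom, Polynomial.eval_sub, Polynomial.eval_X,
      Polynomial.eval_C, sub_self, zero_mem]
  rw [← map_evalRingHom_polarizedIdeal,
    ← hasRegularSeq_quotSMulTop_quotient_iff hsurj (Polynomial.ker_evalRingHom y),
    hasRegularSeq_quotSMulTop_iff hne_top hX (isSMulRegular_X_sub_C_quotient_polarizedIdeal h hy)]

theorem hasRegularSeq_quotient_sup_span_mul_congr [IsNoetherianRing R] {J : Ideal R}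
    (hJ : J ≠ ⊤) (h : A₀ ≤ A₁) (hA₀ : A₀ ≤ J) {y z : R} (hyJ : y ∈ J) (hzJ : z ∈ J)
    (hy : ∀ a ∈ A₁, y * a ∈ A₀ → a ∈ A₀) (hz : ∀ a ∈ A₁, z * a ∈ A₀ → a ∈ A₀) {k : ℕ} :
    HasRegularSeq J (R ⧸ (A₀ ⊔ Ideal.span {y} * A₁)) k ↔
      HasRegularSeq J (R ⧸ (A₀ ⊔ Ideal.span {z} * A₁)) k := by
  rw [hasRegularSeq_quotient_sup_span_mul_iff_polarizedIdeal hJ h hA₀ hyJ hy,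
    hasRegularSeq_quotient_sup_span_mul_iff_polarizedIdeal hJ h hA₀ hzJ hz,
    comap_evalRingHom_eq_comap_evalRingHom (J.sub_mem hyJ hzJ)]

end Polarization

section MonomialIdeals

variable {σ : Type*}

/-- The ideal of `R[x_i : i ∈ σ]` generated by the monomials with exponents in `S`. -/
noncomputable def monomialIdeal (R : Type*) [CommRing R] (S : Set (σ →₀ ℕ)) :
    Ideal (MvPolynomial σ R) :=
  Ideal.span ((fun u => monomial u 1) '' S)

variable {R : Type*} [CommRing R]

theorem monomialIdeal_range {ι : Type*} (w : ι → σ →₀ ℕ) :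
    monomialIdeal R (Set.range w) = Ideal.span (Set.range fun i => monomial (w i) 1) := by
  rw [monomialIdeal, ← Set.range_comp, Function.comp_def]

theorem monomialIdeal_union (S T : Set (σ →₀ ℕ)) :
    monomialIdeal R (S ∪ T) = monomialIdeal R S ⊔ monomialIdeal R T := by
  rw [monomialIdeal, Set.image_union, Ideal.span_union, monomialIdeal, monomialIdeal]

theorem monomialIdeal_image_single_add (v : σ) (m : ℕ) (T : Set (σ →₀ ℕ)) :
    monomialIdeal R ((Finsupp.single v m + ·) '' T) =
      Ideal.span {X v ^ m} * monomialIdeal R T := by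
  rw [monomialIdeal, monomialIdeal, Ideal.span_mul_span', Set.singleton_mul, Set.image_image,
    Set.image_image]
  simp only [X_pow_eq_monomial, monomial_mul, one_mul]

theorem monomialIdeal_union_image_single_add (v : σ) (S T : Set (σ →₀ ℕ)) (m : ℕ) :
    monomialIdeal R (S ∪ (Finsupp.single v m + ·) '' T) =
      monomialIdeal R S ⊔ Ideal.span {X v ^ m} * monomialIdeal R (S ∪ T) := by
  have hle : Ideal.span {X v ^ m} * monomialIdeal R S ≤ monomialIdeal R S := Ideal.mul_le_right
  rw [monomialIdeal_union, monomialIdeal_union S T, monomialIdeal_image_single_add, Ideal.mul_sup,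
    ← sup_assoc, sup_eq_left.mpr hle]

theorem mem_monomialIdeal_of_X_pow_mul_mem {v : σ} {S T : Set (σ →₀ ℕ)}
    (hST : ∀ a ∈ S, ∀ b ∈ T, a v ≤ b v) (m : ℕ) {F : MvPolynomial σ R}
    (hF : F ∈ monomialIdeal R (S ∪ T)) (hXF : X v ^ m * F ∈ monomialIdeal R S) :
    F ∈ monomialIdeal R S := by
  rw [monomialIdeal, mem_ideal_span_monomial_image] at hF hXF ⊢
  intro u hu
  have hXu : Finsupp.single v m + u ∈ (X v ^ m * F).support := by
    rwa [mem_support_iff, X_pow_eq_monomial, coeff_monomial_mul, one_mul, ← mem_support_iff]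
  obtain ⟨a, ha, hau⟩ := hXF _ hXu
  obtain ⟨b, hb | hb, hbu⟩ := hF u hu
  · exact ⟨b, hb, hbu⟩
  · refine ⟨a, ha, fun i => ?_⟩
    obtain rfl | hi := eq_or_ne i v
    · exact (hST a ha b hb).trans (hbu i)
    · simpa only [Finsupp.add_apply, Finsupp.single_eq_of_ne hi, zero_add] using hau i

theorem radical_monomialIdeal_union_image_single_add (v : σ) (S T : Set (σ →₀ ℕ)) {m l : ℕ}
    (hm : m ≠ 0) (hl : l ≠ 0) :
    (monomialIdeal R (S ∪ (Finsupp.single v m + ·) '' T)).radical =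
      (monomialIdeal R (S ∪ (Finsupp.single v l + ·) '' T)).radical := by
  rw [monomialIdeal_union_image_single_add, monomialIdeal_union_image_single_add,
    radical_sup_span_pow_mul _ _ _ hm, radical_sup_span_pow_mul _ _ _ hl]

end MonomialIdeals

section Depth

variable {K : Type} [Field K] {n : ℕ}

theorem mem_mIdeal_iff {F : MvPolynomial (Fin n) K} : F ∈ mIdeal K n ↔ constantCoeff F = 0 := by
  have hne_zero (u : Fin n →₀ ℕ) : (∃ i ∈ Set.univ, u i ≠ 0) ↔ u ≠ 0 := by
    rw [DFunLike.ne_iff]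
    simp only [Set.mem_univ, true_and, Finsupp.zero_apply]
  simp only [mIdeal, ← Set.image_univ, mem_ideal_span_X_image, hne_zero, constantCoeff_eq,
    ← notMem_support_iff]
  exact ⟨fun h h₀ => h 0 h₀ rfl, fun h u hu hu₀ => h (hu₀ ▸ hu)⟩

theorem mIdeal_ne_top : mIdeal K n ≠ ⊤ := by
  rw [Ideal.ne_top_iff_one, mem_mIdeal_iff, map_one]
  exact one_ne_zero

theorem monomialIdeal_le_mIdeal {S : Set (Fin n →₀ ℕ)} (hS : 0 ∉ S) :
    monomialIdeal K S ≤ mIdeal K n := by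
  classical
  refine Ideal.span_le.mpr ?_
  rintro _ ⟨u, hu, rfl⟩
  have hu₀ : u ≠ 0 := fun h => hS (h ▸ hu)
  rw [SetLike.mem_coe, mem_mIdeal_iff, constantCoeff_monomial, if_neg hu₀]

theorem depthQuot_congr {I J : Ideal (MvPolynomial (Fin n) K)}
    (h : ∀ k, HasRegularSeq (mIdeal K n) (MvPolynomial (Fin n) K ⧸ I) k ↔
      HasRegularSeq (mIdeal K n) (MvPolynomial (Fin n) K ⧸ J) k) :
    depthQuot K n I = depthQuot K n J :=
  congrArg sSup (Set.ext h)

theorem depthQuot_monomialIdeal_union_image_single_add {v : Fin n} {S T : Set (Fin n →₀ ℕ)}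
    (hS : 0 ∉ S) (hST : ∀ a ∈ S, ∀ b ∈ T, a v ≤ b v) {m l : ℕ} (hm : m ≠ 0) (hl : l ≠ 0) :
    depthQuot K n (monomialIdeal K (S ∪ (Finsupp.single v m + ·) '' T)) =
      depthQuot K n (monomialIdeal K (S ∪ (Finsupp.single v l + ·) '' T)) := by
  have hX {i : ℕ} (hi : i ≠ 0) : (X v : MvPolynomial (Fin n) K) ^ i ∈ mIdeal K n :=
    Ideal.pow_mem_of_mem _ (Ideal.subset_span (Set.mem_range_self v)) i hi.pos
  rw [monomialIdeal_union_image_single_add, monomialIdeal_union_image_single_add]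
  exact depthQuot_congr fun k => hasRegularSeq_quotient_sup_span_mul_congr mIdeal_ne_top
    (Ideal.span_mono (Set.image_mono Set.subset_union_left)) (monomialIdeal_le_mIdeal hS) (hX hm)
    (hX hl) (fun _ => mem_monomialIdeal_of_X_pow_mul_mem hST m)
    (fun _ => mem_monomialIdeal_of_X_pow_mul_mem hST l)

end Depth

theorem shift_depth_dim_general (K : Type) [Field K] {n : ℕ} {v : Fin n} {S : Set (Fin n →₀ ℕ)}
    {p d : ℕ} (hS₀ : 0 ∉ S) (hS : ∀ a ∈ S, a v ≤ p) {ι : Type*} (q : ι → ℕ) (ε : ι → Fin n →₀ ℕ)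
    (hq : ∀ i, p + d < q i) :
    depthQuot K n (monomialIdeal K (S ∪ Set.range fun i => Finsupp.single v (q i) + ε i)) =
        depthQuot K n
          (monomialIdeal K (S ∪ Set.range fun i => Finsupp.single v (q i - d) + ε i)) ∧
      ringKrullDim (MvPolynomial (Fin n) K ⧸
          monomialIdeal K (S ∪ Set.range fun i => Finsupp.single v (q i) + ε i)) =
        ringKrullDim (MvPolynomial (Fin n) K ⧸
          monomialIdeal K (S ∪ Set.range fun i => Finsupp.single v (q i - d) + ε i)) := by
  let T : Set (Fin n →₀ ℕ) := Set.range fun i => Finsupp.single v (q i - (d + 1)) + ε i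
  have hST : ∀ a ∈ S, ∀ b ∈ T, a v ≤ b v := by
    rintro a ha _ ⟨i, rfl⟩
    have hle : p ≤ q i - (d + 1) := by have := hq i; lia
    rw [Finsupp.add_apply, Finsupp.single_eq_same]
    exact (hS a ha).trans (hle.trans (Nat.le_add_right _ _))
  have hrange {r : ι → ℕ} {m : ℕ} (hr : ∀ i, r i = m + (q i - (d + 1))) :
      (Set.range fun i => Finsupp.single v (r i) + ε i) = (Finsupp.single v m + ·) '' T := by
    rw [← Set.range_comp]
    simp only [Function.comp_def, hr, Finsupp.single_add, add_assoc]
  rw [hrange (m := d + 1) fun i => by have := hq i; lia,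
    hrange (m := 1) fun i => by have := hq i; lia]
  exact ⟨depthQuot_monomialIdeal_union_image_single_add hS₀ hST d.succ_ne_zero one_ne_zero,
    ringKrullDim_quotient_eq_of_radical_eq
      (radical_monomialIdeal_union_image_single_add v S T d.succ_ne_zero one_ne_zero)⟩

/-- **Signature invariants of monomial ideals** (Lemma: depth and dimension under the
shift operation).  In the gap setup, where the minimal generating set of the monomial
ideal `I ⊆ R = K[x_1,…,x_n]` (of height at least `2`) is
`G(I) = ⋃_{j=0}^{p} {x_1^j x^{γ_{i,j}}} ∪ {x_1^{q_i} x^{ε_i}}` with `q_1 - p ≥ 2`, and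
where the shift `I_sft` is the ideal generated by
`⋃_{j=0}^{p} {x_1^j x^{γ_{i,j}}} ∪ {x_1^{q_i - q_1 + p + 1} x^{ε_i}}`,
one has `depth(R/I) = depth(R/I_sft)` and `dim(R/I) = dim(R/I_sft)`. -/
theorem shift_depth_dim
    (K : Type) [Field K] (n : ℕ) (hn : 0 < n)
    (p s : ℕ) (hs : 0 < s)
    (qe : Fin s → ℕ) (hmono : Monotone qe) (hq : p + 2 ≤ qe ⟨0, hs⟩)
    (k : Fin (p + 1) → ℕ) (hk : ∀ j, 0 < k j)
    (γ : (j : Fin (p + 1)) → Fin (k j) → (Fin n →₀ ℕ)) (hγ : ∀ j i, γ j i ⟨0, hn⟩ = 0)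
    (ε : Fin s → (Fin n →₀ ℕ)) (hε : ∀ i, ε i ⟨0, hn⟩ = 0)
    (w : ((Σ j : Fin (p + 1), Fin (k j)) ⊕ Fin s) → (Fin n →₀ ℕ))
    (hw : w = Sum.elim
      (fun ji : Σ j : Fin (p + 1), Fin (k j) =>
        Finsupp.single ⟨0, hn⟩ (ji.1 : ℕ) + γ ji.1 ji.2)
      (fun i : Fin s => Finsupp.single ⟨0, hn⟩ (qe i) + ε i))
    (hch : ∀ a b, w a ≤ w b → a = b)
    (I : Ideal (MvPolynomial (Fin n) K))
    (hI : I = Ideal.span (Set.range fun t => monomial (w t) (1 : K)))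
    (hht : (2 : ℕ∞) ≤ heightOf I)
    (Isft : Ideal (MvPolynomial (Fin n) K))
    (hIsft : Isft = Ideal.span
      ((Set.range fun ji : Σ j : Fin (p + 1), Fin (k j) =>
          monomial (w (Sum.inl ji)) (1 : K)) ∪
       (Set.range fun i : Fin s =>
          monomial (Finsupp.single ⟨0, hn⟩ (qe i - qe ⟨0, hs⟩ + p + 1) + ε i) (1 : K)))) :
    depthQuot K n I = depthQuot K n Isft ∧
      ringKrullDim (MvPolynomial (Fin n) K ⧸ I) =
        ringKrullDim (MvPolynomial (Fin n) K ⧸ Isft) := by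
  let v : Fin n := ⟨0, hn⟩
  let d := qe ⟨0, hs⟩ - p - 1
  have hq₁ (i : Fin s) : qe ⟨0, hs⟩ ≤ qe i := hmono (Fin.mk_le_of_le_val (Nat.zero_le _))
  have hgap (i : Fin s) : p + d < qe i := by have := hq₁ i; lia
  have hshift (i : Fin s) : qe i - qe ⟨0, hs⟩ + p + 1 = qe i - d := by have := hq₁ i; lia
  have hlow : ∀ a ∈ Set.range (w ∘ Sum.inl), a ≠ 0 ∧ a v ≤ p := by
    rintro _ ⟨ji, rfl⟩
    refine ⟨fun h₀ => Sum.inl_ne_inr (hch (Sum.inl ji) (Sum.inr ⟨0, hs⟩) (h₀.trans_le zero_le)), ?_⟩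
    simpa [hw, hγ, v] using ji.1.is_le
  have hI_eq : I = monomialIdeal K (Set.range (w ∘ Sum.inl) ∪
      Set.range fun i => Finsupp.single v (qe i) + ε i) := by
    rw [hI, ← monomialIdeal_range, Sum.range_eq w, hw]
    rfl
  have hIsft_eq : Isft = monomialIdeal K (Set.range (w ∘ Sum.inl) ∪
      Set.range fun i => Finsupp.single v (qe i - d) + ε i) := by
    simp only [hIsft, hshift, monomialIdeal_union, monomialIdeal_range, Ideal.span_union]
    rfl
  rw [hI_eq, hIsft_eq]
  exact shift_depth_dim_general K (fun h₀ => (hlow 0 h₀).1 rfl) (fun a ha => (hlow a ha).2)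
    qe ε hgap
end

section
/- In the gap setup with p = 0, one has the colon ideal identity (I : x_1^{q_1 − 1}) = I_sft, where (I : g) = {h ∈ R : h·g ∈ I}. -/
open MvPolynomial

/-!
Dividing by `x ^ d` acts on the generators of a monomial ideal one at a time, since `a ≤ m + d` if
and only if `a - d ≤ m` for exponent vectors with truncated subtraction. Thus `(I : x ^ d)` is
generated by the monomials with exponents `a - d`. When `d` is a multiple of the first unit vector,
this leaves the generators free of `x₁` alone and lowers the power of `x₁` in the others, by
exactly `q₁ - 1` because no `qᵢ` is smaller than `q₁`.
-/

section MonomialIdeal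

variable {R σ ι : Type*} [CommSemiring R]

theorem mem_span_range_monomial_iff {a : ι → σ →₀ ℕ} {f : MvPolynomial σ R} :
    f ∈ Ideal.span (Set.range fun i => monomial (a i) (1 : R)) ↔
      ∀ m ∈ f.support, ∃ i, a i ≤ m := by
  rw [Set.range_comp' (fun m => monomial m (1 : R)) a, mem_ideal_span_monomial_image]
  simp only [Set.exists_range_iff]

theorem support_mul_monomial_one (f : MvPolynomial σ R) (d : σ →₀ ℕ) :
    (f * monomial d 1).support = f.support.map (addRightEmbedding d) :=
  AddMonoidAlgebra.support_coeff_mul_single f _ (by simp) _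

theorem colon_span_range_monomial (a : ι → σ →₀ ℕ) (d : σ →₀ ℕ) :
    (Ideal.span (Set.range fun i => monomial (a i) (1 : R))).colon {monomial d (1 : R)} =
      Ideal.span (Set.range fun i => monomial (a i - d) (1 : R)) := by
  ext f
  rw [Submodule.mem_colon_singleton, smul_eq_mul, mem_span_range_monomial_iff,
    mem_span_range_monomial_iff, support_mul_monomial_one]
  simp only [Finset.forall_mem_map, addRightEmbedding_apply, tsub_le_iff_right]

end MonomialIdeal

theorem tsub_single_eq_self {σ α : Type*} [AddCommMonoid α] [PartialOrder α]
    [CanonicallyOrderedAdd α] [Sub α] [OrderedSub α] {u : σ →₀ α} {x : σ} (hu : u x = 0) (d : α) :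
    u - Finsupp.single x d = u := by
  ext y
  obtain rfl | hy := eq_or_ne y x
  · rw [Finsupp.tsub_apply, hu, zero_tsub]
  · rw [Finsupp.tsub_apply, Finsupp.single_eq_of_ne hy, tsub_zero]

theorem colon_eq_shift_general {R σ ι κ : Type*} [CommSemiring R] {x : σ}
    {γ : ι → σ →₀ ℕ} (hγ : ∀ i, γ i x = 0) (ε : κ → σ →₀ ℕ)
    {q : κ → ℕ} {q₁ : ℕ} (hq₁ : 1 ≤ q₁) (hq : ∀ j, q₁ ≤ q j) :
    (Ideal.span (Set.range fun t =>
        monomial (Sum.elim γ (fun j => Finsupp.single x (q j) + ε j) t) (1 : R))).colon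
      (Ideal.span {(X x : MvPolynomial σ R) ^ (q₁ - 1)}) =
    Ideal.span
      ((Set.range fun i => monomial (γ i) (1 : R)) ∪
       (Set.range fun j => monomial (Finsupp.single x (q j - q₁ + 1) + ε j) (1 : R))) := by
  have exponent_tsub (j : κ) : Finsupp.single x (q j) + ε j - Finsupp.single x (q₁ - 1) =
      Finsupp.single x (q j - q₁ + 1) + ε j := by
    have hle : q₁ - 1 ≤ q j := (Nat.sub_le q₁ 1).trans (hq j)
    rw [← tsub_add_eq_add_tsub (Finsupp.single_mono hle), ← Finsupp.single_tsub,
      tsub_tsub_assoc (hq j) hq₁]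
  have generator_tsub : (fun t => monomial (Sum.elim γ (fun j => Finsupp.single x (q j) + ε j) t -
        Finsupp.single x (q₁ - 1)) (1 : R)) =
      Sum.elim (fun i => monomial (γ i) 1)
        (fun j => monomial (Finsupp.single x (q j - q₁ + 1) + ε j) 1) := by
    funext t
    rcases t with i | j
    · rw [Sum.elim_inl, Sum.elim_inl, tsub_single_eq_self (hγ i)]
    · rw [Sum.elim_inr, Sum.elim_inr, exponent_tsub]
  rw [Ideal.colon_span, X_pow_eq_monomial, colon_span_range_monomial, generator_tsub,
    Set.Sum.elim_range]

/-- **Signature invariants of monomial ideals** (Lemma: colon description of the shift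
when `p = 0`).  In the gap setup with `p = 0`, where the minimal generating set of the
monomial ideal `I ⊆ R = K[x_1,…,x_n]` (of height at least `2`) is
`G(I) = {x^{γ_1},…,x^{γ_{k_0}}} ∪ {x_1^{q_1} x^{ε_1},…,x_1^{q_s} x^{ε_s}}` with
`q_1 ≥ 2` and no generator in the first family divisible by `x_1`, and where the shift
`I_sft` is generated by `{x^{γ_i}} ∪ {x_1^{q_i - q_1 + 1} x^{ε_i}}`, one has
`(I : x_1^{q_1 - 1}) = I_sft`. -/
theorem colon_eq_shift
    (K : Type) [Field K] (n : ℕ) (hn : 0 < n)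
    (s : ℕ) (hs : 0 < s)
    (qe : Fin s → ℕ) (hmono : Monotone qe) (hq : 2 ≤ qe ⟨0, hs⟩)
    (k₀ : ℕ) (hk : 0 < k₀)
    (γ : Fin k₀ → (Fin n →₀ ℕ)) (hγ : ∀ i, γ i ⟨0, hn⟩ = 0)
    (ε : Fin s → (Fin n →₀ ℕ)) (hε : ∀ i, ε i ⟨0, hn⟩ = 0)
    (w : (Fin k₀ ⊕ Fin s) → (Fin n →₀ ℕ))
    (hw : w = Sum.elim γ (fun i : Fin s => Finsupp.single ⟨0, hn⟩ (qe i) + ε i))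
    (hch : ∀ a b, w a ≤ w b → a = b)
    (I : Ideal (MvPolynomial (Fin n) K))
    (hI : I = Ideal.span (Set.range fun t => monomial (w t) (1 : K)))
    (hht : (2 : ℕ∞) ≤ heightOf I)
    (Isft : Ideal (MvPolynomial (Fin n) K))
    (hIsft : Isft = Ideal.span
      ((Set.range fun i : Fin k₀ => monomial (γ i) (1 : K)) ∪
       (Set.range fun i : Fin s =>
          monomial (Finsupp.single ⟨0, hn⟩ (qe i - qe ⟨0, hs⟩ + 1) + ε i) (1 : K)))) :
    Submodule.colon I (Ideal.span
        {(X ⟨0, hn⟩ : MvPolynomial (Fin n) K) ^ (qe ⟨0, hs⟩ - 1)}) = Isft := by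
  subst hI hw hIsft
  exact colon_eq_shift_general hγ ε (by lia) fun _ => hmono (Nat.zero_le _)
end
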